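/- arXiv:1004.2452 — 2 statements merged into one kernel-verified Lean document; each statement's English description precedes it below -/
import Mathlib

section
/- Let K be a quantum symmetric kernel of order r on (ℂ^d)^{⊗r} with θ := Tr(ρ^{⊗r} K), and for 0 ≤ l ≤ r let K_l := P_{{1,...,l}}(K) be its Hoeffding projection, regarded as a selfadjoint operator on (ℂ^d)^{⊗l} tensored with the identity (so K_0 = θ·1). Then for every n ≥ r: (i) U_n = Σ_{l=0}^{r} C(r,l) U_{n,l}, where U_{n,l} is the quantum U-statistic of order l with kernel K_l; (ii) for 1 ≤ l ≠ l' ≤ r, U_{n,l} and U_{n,l'} are orthogonal in L²(ρ^{⊗n}); (iii) Var_ρ(U_n) := Tr(ρ^{⊗n} U_n²) − θ² = Σ_{l=1}^{r} C(r,l)^2 C(n,l)^{-1} Tr(ρ^{⊗l} K_l²). Consequently, if K_1 = ... = K_{c−1} = 0 for some 1 ≤ c ≤ r, then there is a constant C with Var_ρ(U_n) ≤ C n^{−c} for all n ≥ r. -/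
open scoped BigOperators
open Matrix
open scoped ComplexOrder

/-- The tensor product of a family of `d × d` matrices, as a matrix indexed by
multi-indices `Fin n → Fin d`. -/
noncomputable def tensorFam {d n : ℕ} (M : Fin n → Matrix (Fin d) (Fin d) ℂ) :
    Matrix (Fin n → Fin d) (Fin n → Fin d) ℂ :=
  Matrix.of fun x y => ∏ i, M i (x i) (y i)

/-- The quantum conditional expectation `E(K | A)` with respect to `ρ^{⊗n}`. -/
noncomputable def qCondExp {d n : ℕ} (ρ : Matrix (Fin d) (Fin d) ℂ) (A : Finset (Fin n))
    (K : Matrix (Fin n → Fin d) (Fin n → Fin d) ℂ) :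
    Matrix (Fin n → Fin d) (Fin n → Fin d) ℂ :=
  Matrix.of fun x y =>
    (∏ j ∈ Aᶜ, if x j = y j then (1 : ℂ) else 0) *
      ∑ s : Fin n → Fin d, ∑ t : Fin n → Fin d,
        (if ∀ i ∈ A, s i = x i ∧ t i = y i then (1 : ℂ) else 0) *
          (∏ j ∈ Aᶜ, ρ (t j) (s j)) * K s t

/-- The ampliation `K^{(β)}` of a kernel `K` of order `r` to `(ℂ^d)^{⊗n}`: `K` acts on the
tensor slots in `β` (enumerated in increasing order) and the identity acts elsewhere. -/
noncomputable def ampl {d r n : ℕ} (K : Matrix (Fin r → Fin d) (Fin r → Fin d) ℂ)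
    (β : Finset (Fin n)) (hβ : β.card = r) :
    Matrix (Fin n → Fin d) (Fin n → Fin d) ℂ :=
  Matrix.of fun x y =>
    K (fun i => x ((β.orderIsoOfFin hβ i : Fin n)))
        (fun i => y ((β.orderIsoOfFin hβ i : Fin n))) *
      ∏ j ∈ βᶜ, if x j = y j then (1 : ℂ) else 0

/-- The quantum U-statistic `U_n = C(n,r)⁻¹ Σ_β K^{(β)}`. -/
noncomputable def qUstat {d r : ℕ} (K : Matrix (Fin r → Fin d) (Fin r → Fin d) ℂ)
    (n : ℕ) : Matrix (Fin n → Fin d) (Fin n → Fin d) ℂ :=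
  (n.choose r : ℂ)⁻¹ •
    ∑ β ∈ (Finset.powersetCard r (Finset.univ : Finset (Fin n))).attach,
      ampl K β.1 (Finset.mem_powersetCard.mp β.2).2

/-- The `l`-th Hoeffding component `K_l := P_{{1,...,l}} K` of a kernel of order `r`,
regarded as a kernel of order `l` (the remaining slots carry the identity). -/
noncomputable def hoefK {d r : ℕ} [NeZero d] (ρ : Matrix (Fin d) (Fin d) ℂ)
    (K : Matrix (Fin r → Fin d) (Fin r → Fin d) ℂ) (l : ℕ) :
    Matrix (Fin l → Fin d) (Fin l → Fin d) ℂ :=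
  Matrix.of fun x y =>
    (∑ B ∈ (Finset.univ.filter fun i : Fin r => (i : ℕ) < l).powerset,
      ((-1 : ℂ) ^ ((Finset.univ.filter fun i : Fin r => (i : ℕ) < l).card - B.card)) •
        qCondExp ρ B K)
      (fun i => if h : (i : ℕ) < l then x ⟨i, h⟩ else 0)
      (fun i => if h : (i : ℕ) < l then y ⟨i, h⟩ else 0)

/-!
On product operators `M₁ ⊗ ⋯ ⊗ Mₙ` everything happens slot by slot. Writing `ε M = Tr(ρ M) 1`,
the conditional expectation `E(· | A)` applies the identity in the slots of `A` and `ε` in the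
others, so expanding `∏ (id - ε)` over `A` shows that `P_A` applies `id - ε` in the slots of `A`
and `ε` in the others. Expanding `∏ ((id - ε) + ε)` over all slots gives `∑_A P_A = id`. As
`ε ∘ (id - ε) = 0`, the ranges of `P_A` and `P_B` are orthogonal for `A ≠ B`. As `ε 1 = 1`, `P_A`
kills `K^{(β)}` unless `A ⊆ β`, in which case `P_A K^{(β)}` depends on `#A` only up to ampliation,
by symmetry of `K`. Hence `K^{(β)}` is the sum over `A ⊆ β` of the ampliations to `A` of the
Hoeffding components `K_{#A}`, and the theorem follows by counting the `β` that contain `A`.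
-/

namespace QuantumUstat

open Finset

theorem sum_powersetCard_sum_powerset {α M : Type*} [AddCommMonoid M]
    (s : Finset α) (r : ℕ) (f : Finset α → M) :
    ∑ β ∈ powersetCard r s, ∑ A ∈ β.powerset, f A =
      ∑ l ∈ range (r + 1), (#s - l).choose (r - l) • ∑ A ∈ powersetCard l s, f A := by
  classical
  have by_card : ∀ β ∈ powersetCard r s, ∑ A ∈ β.powerset, f A =
      ∑ l ∈ range (r + 1), ∑ A ∈ powersetCard l β, f A := fun β hβ => by
    rw [sum_powerset, (mem_powersetCard.1 hβ).2]
  rw [sum_congr rfl by_card, sum_comm]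
  refine sum_congr rfl fun l hl => ?_
  have swap : ∑ β ∈ powersetCard r s, ∑ A ∈ powersetCard l β, f A =
      ∑ A ∈ powersetCard l s, ∑ β ∈ powersetCard r s with A ⊆ β, f A :=
    sum_comm' fun β A => by
      simp only [mem_powersetCard, mem_filter]
      exact ⟨fun ⟨⟨hβ, hr⟩, hA, hl⟩ => ⟨⟨⟨hβ, hr⟩, hA⟩, hA.trans hβ, hl⟩,
        fun ⟨⟨⟨hβ, hr⟩, hA⟩, _, hl⟩ => ⟨⟨hβ, hr⟩, hA, hl⟩⟩
  rw [swap, smul_sum]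
  refine sum_congr rfl fun A hA => ?_
  obtain ⟨hAs, rfl⟩ := mem_powersetCard.1 hA
  rw [sum_const, card_filter_powersetCard_subset _ _ _ hAs (mem_range_succ_iff.1 hl)]

theorem pow_le_pow_mul_factorial_mul_choose {l n : ℕ} (hl : 1 ≤ l) (hln : l ≤ n) :
    n ^ l ≤ l ^ l * (l.factorial * n.choose l) := by
  obtain ⟨k, rfl⟩ := Nat.exists_eq_add_of_le hln
  calc (l + k) ^ l ≤ (l * (l + k + 1 - l)) ^ l := by
        rw [add_assoc, Nat.add_sub_cancel_left]
        exact Nat.pow_le_pow_left (by nlinarith) l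
    _ = l ^ l * (l + k + 1 - l) ^ l := mul_pow _ _ _
    _ ≤ l ^ l * (l.factorial * (l + k).choose l) := by
        rw [← Nat.descFactorial_eq_factorial_mul_choose]
        exact Nat.mul_le_mul_left _ (Nat.pow_sub_le_descFactorial _ l)

theorem inv_choose_le_div_pow {c l n : ℕ} (hl : 1 ≤ l) (hcl : c ≤ l) (hln : l ≤ n) :
    (n.choose l : ℝ)⁻¹ ≤ l ^ l * l.factorial / (n : ℝ) ^ c := by
  have hn : 0 < n := hl.trans hln
  have hchoose : (0 : ℝ) < n.choose l := Nat.cast_pos.2 (Nat.choose_pos hln)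
  rw [inv_le_iff_one_le_mul₀ hchoose, div_mul_eq_mul_div, one_le_div (by positivity), mul_assoc]
  exact_mod_cast (Nat.pow_le_pow_right hn hcl).trans (pow_le_pow_mul_factorial_mul_choose hl hln)

theorem exists_norm_sum_inv_choose_mul_le {𝕜 : Type*} [RCLike 𝕜] {a : ℕ → 𝕜} {c : ℕ}
    (ha : ∀ l, 1 ≤ l → l < c → a l = 0) (r : ℕ) :
    ∃ C : ℝ, ∀ n : ℕ, r ≤ n →
      ‖∑ l ∈ Icc 1 r, (n.choose l : 𝕜)⁻¹ * a l‖ ≤ C / (n : ℝ) ^ c := by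
  refine ⟨∑ l ∈ Icc 1 r, l ^ l * l.factorial * ‖a l‖, fun n hrn => ?_⟩
  rw [sum_div]
  refine (norm_sum_le _ _).trans (sum_le_sum fun l hl => ?_)
  obtain ⟨hl1, hlr⟩ := mem_Icc.1 hl
  rcases lt_or_ge l c with hlc | hcl
  · simp [ha l hl1 hlc]
  rw [norm_mul, norm_inv, RCLike.norm_natCast, mul_div_right_comm]
  gcongr
  exact inv_choose_le_div_pow hl1 hcl (hlr.trans hrn)

theorem multilinearMap_piecewise_sub {R ι N : Type*} {M : ι → Type*} [CommRing R] [DecidableEq ι]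
    [∀ i, AddCommGroup (M i)] [∀ i, Module R (M i)] [AddCommGroup N] [Module R N]
    (f : MultilinearMap R M N) (m m' : ∀ i, M i) (t : Finset ι) :
    f (t.piecewise (m - m') m') =
      ∑ s ∈ t.powerset, (-1 : R) ^ (#t - #s) • f (s.piecewise m m') := by
  have negate_on_t : t.piecewise (m - m') m' =
      t.piecewise (m + t.piecewise (-m') m') (t.piecewise (-m') m') := by
    ext i
    by_cases hi : i ∈ t <;> simp [hi, sub_eq_add_neg]
  rw [negate_on_t, f.map_piecewise_add]
  refine sum_congr rfl fun s hs => ?_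
  have hst : s ⊆ t := mem_powerset.1 hs
  have collect_signs : s.piecewise m (t.piecewise (-m') m') =
      (t \ s).piecewise (fun i => (-1 : R) • s.piecewise m m' i) (s.piecewise m m') := by
    ext i
    by_cases his : i ∈ s
    · simp [his]
    · by_cases hit : i ∈ t <;> simp [his, hit]
  rw [collect_signs, f.map_piecewise_smul, prod_const, card_sdiff_of_subset hst]

variable {d r r' l l' n : ℕ}

/-- Operators on the tensor power `(ℂ^d)^{⊗n}`. -/
abbrev TMat (d n : ℕ) := Matrix (Fin n → Fin d) (Fin n → Fin d) ℂ

/-! ### Product operators -/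

/-- The map `(M₁, …, Mₙ) ↦ M₁ ⊗ ⋯ ⊗ Mₙ`, that is `tensorFam`, as a multilinear map. -/
noncomputable def tensorMultilinear (d n : ℕ) :
    MultilinearMap ℂ (fun _ : Fin n => Matrix (Fin d) (Fin d) ℂ) (TMat d n) :=
  (Matrix.ofLinearEquiv ℂ).toLinearMap.compMultilinearMap <|
    MultilinearMap.pi fun x => MultilinearMap.pi fun y =>
      (MultilinearMap.mkPiAlgebra ℂ (Fin n) ℂ).compLinearMap fun i =>
        Matrix.entryLinearMap ℂ ℂ (x i) (y i)

theorem coe_tensorMultilinear : ⇑(tensorMultilinear d n) = tensorFam := rfl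

theorem tensorFam_apply (M : Fin n → Matrix (Fin d) (Fin d) ℂ) (x y : Fin n → Fin d) :
    tensorFam M x y = ∏ i, M i (x i) (y i) := rfl

theorem tensorFam_eq_zero {M : Fin n → Matrix (Fin d) (Fin d) ℂ} {i : Fin n} (hi : M i = 0) :
    tensorFam M = 0 := by
  rw [← coe_tensorMultilinear, (tensorMultilinear d n).map_coord_zero i hi]

theorem tensorFam_one : tensorFam (1 : Fin n → Matrix (Fin d) (Fin d) ℂ) = 1 := by
  ext x y
  simp [tensorFam_apply, Matrix.one_apply, Fintype.prod_boole, funext_iff]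

theorem tensorFam_mul (M N : Fin n → Matrix (Fin d) (Fin d) ℂ) :
    tensorFam M * tensorFam N = tensorFam fun i => M i * N i := by
  ext x y
  simp only [tensorFam_apply, Matrix.mul_apply, Fintype.prod_sum, prod_mul_distrib]

theorem trace_tensorFam (M : Fin n → Matrix (Fin d) (Fin d) ℂ) :
    (tensorFam M).trace = ∏ i, (M i).trace := by
  simp only [Matrix.trace, diag_apply, tensorFam_apply, Fintype.prod_sum]

theorem conjTranspose_tensorFam (M : Fin n → Matrix (Fin d) (Fin d) ℂ) :
    (tensorFam M)ᴴ = tensorFam fun i => (M i)ᴴ := by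
  ext x y
  simp only [tensorFam_apply, Matrix.conjTranspose_apply, star_prod]

theorem single_eq_tensorFam (s t : Fin n → Fin d) :
    Matrix.single s t (1 : ℂ) = tensorFam fun i => Matrix.single (s i) (t i) 1 := by
  ext x y
  simp only [tensorFam_apply, Matrix.single_apply, Fintype.prod_boole, forall_and, funext_iff]

theorem tensorFam_ext {V : Type*} [AddCommMonoid V] [Module ℂ V] {f g : TMat d n →ₗ[ℂ] V}
    (h : ∀ M, f (tensorFam M) = g (tensorFam M)) : f = g :=
  Matrix.ext_linearMap ℂ fun s t => LinearMap.ext_ring <| by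
    simpa only [LinearMap.comp_apply, Matrix.singleLinearMap_apply, single_eq_tensorFam] using h _

/-! ### Expectations -/

/-- The expectation `Tr(ρ^{⊗n} X)` of an operator in the product state. -/
noncomputable def expect (ρ : Matrix (Fin d) (Fin d) ℂ) (n : ℕ) : TMat d n →ₗ[ℂ] ℂ :=
  Matrix.traceLinearMap _ ℂ ℂ ∘ₗ LinearMap.mulLeft ℂ (tensorFam fun _ : Fin n => ρ)

theorem expect_apply (ρ : Matrix (Fin d) (Fin d) ℂ) (X : TMat d n) :
    expect ρ n X = ((tensorFam fun _ : Fin n => ρ) * X).trace := rfl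

theorem expect_tensorFam (ρ : Matrix (Fin d) (Fin d) ℂ) (M : Fin n → Matrix (Fin d) (Fin d) ℂ) :
    expect ρ n (tensorFam M) = ∏ i, (ρ * M i).trace := by
  rw [expect_apply, tensorFam_mul, trace_tensorFam]

theorem expect_one {ρ : Matrix (Fin d) (Fin d) ℂ} (hρtr : ρ.trace = 1) : expect ρ n 1 = 1 := by
  simp [← tensorFam_one, expect_tensorFam, hρtr]

/-- The bilinear correlation form `(X, Y) ↦ Tr(ρ^{⊗n} X Y)`. It has no adjoint on `X`, so the
inner product `⟨X, Y⟩` of `L²(ρ^{⊗n})` is `corr ρ n Xᴴ Y`. -/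
noncomputable def corr (ρ : Matrix (Fin d) (Fin d) ℂ) (n : ℕ) :
    TMat d n →ₗ[ℂ] TMat d n →ₗ[ℂ] ℂ :=
  (LinearMap.mul ℂ (TMat d n)).compr₂ (expect ρ n)

theorem corr_apply (ρ : Matrix (Fin d) (Fin d) ℂ) (X Y : TMat d n) :
    corr ρ n X Y = expect ρ n (X * Y) := rfl

theorem corr_tensorFam (ρ : Matrix (Fin d) (Fin d) ℂ) (M N : Fin n → Matrix (Fin d) (Fin d) ℂ) :
    corr ρ n (tensorFam M) (tensorFam N) = ∏ i, (ρ * (M i * N i)).trace := by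
  rw [corr_apply, tensorFam_mul, expect_tensorFam]

/-- The one-slot expectation `Tr(ρ M)`, as a scalar operator. -/
noncomputable def slotMean (ρ M : Matrix (Fin d) (Fin d) ℂ) : Matrix (Fin d) (Fin d) ℂ :=
  (ρ * M).trace • 1

/-- The centering `M - Tr(ρ M)` of a one-slot operator. -/
noncomputable def center (ρ M : Matrix (Fin d) (Fin d) ℂ) : Matrix (Fin d) (Fin d) ℂ :=
  M - slotMean ρ M

theorem slotMean_one {ρ : Matrix (Fin d) (Fin d) ℂ} (hρtr : ρ.trace = 1) : slotMean ρ 1 = 1 := by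
  rw [slotMean, mul_one, hρtr, one_smul]

theorem center_one {ρ : Matrix (Fin d) (Fin d) ℂ} (hρtr : ρ.trace = 1) : center ρ 1 = 0 := by
  rw [center, slotMean_one hρtr, sub_self]

theorem trace_mul_center {ρ : Matrix (Fin d) (Fin d) ℂ} (hρtr : ρ.trace = 1)
    (M : Matrix (Fin d) (Fin d) ℂ) : (ρ * center ρ M).trace = 0 := by
  simp [center, slotMean, mul_sub, hρtr]

/-! ### Conditional expectations and Hoeffding projections -/

theorem qCondExp_apply (ρ : Matrix (Fin d) (Fin d) ℂ) (A : Finset (Fin n)) (X : TMat d n)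
    (x y : Fin n → Fin d) :
    qCondExp ρ A X x y = (∏ j ∈ Aᶜ, if x j = y j then 1 else 0) *
      (tensorFam (A.piecewise (fun i => Matrix.single (y i) (x i) 1) fun _ => ρ) * X).trace := by
  rw [Matrix.trace, qCondExp, of_apply, Finset.sum_comm]
  simp only [diag_apply, Matrix.mul_apply]
  congr 1
  refine sum_congr rfl fun t _ => sum_congr rfl fun s _ => congrArg (· * X s t) ?_
  rw [tensorFam_apply, ← prod_mul_prod_compl A]
  congr 1
  · rw [prod_congr rfl fun i hi => by rw [piecewise_eq_of_mem _ _ _ hi, Matrix.single_apply],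
      prod_boole]
    simp only [and_comm, eq_comm]
  · exact prod_congr rfl fun i hi => by rw [piecewise_eq_of_notMem _ _ _ (mem_compl.1 hi)]

/-- The conditional expectation `E(· | A)`, that is `qCondExp`, as a linear map. -/
noncomputable def condExp (ρ : Matrix (Fin d) (Fin d) ℂ) (A : Finset (Fin n)) :
    TMat d n →ₗ[ℂ] TMat d n where
  toFun := qCondExp ρ A
  map_add' X Y := by
    ext x y
    simp only [qCondExp_apply, Matrix.add_apply, mul_add, Matrix.trace_add]
  map_smul' c X := by
    ext x y
    simp only [qCondExp_apply, Matrix.smul_apply, mul_smul_comm, Matrix.trace_smul,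
      RingHom.id_apply]

theorem condExp_apply (ρ : Matrix (Fin d) (Fin d) ℂ) (A : Finset (Fin n)) (X : TMat d n) :
    condExp ρ A X = qCondExp ρ A X := rfl

theorem condExp_tensorFam (ρ : Matrix (Fin d) (Fin d) ℂ) (A : Finset (Fin n))
    (M : Fin n → Matrix (Fin d) (Fin d) ℂ) :
    condExp ρ A (tensorFam M) = tensorFam (A.piecewise M fun i => slotMean ρ (M i)) := by
  ext x y
  rw [condExp_apply, qCondExp_apply, tensorFam_mul, trace_tensorFam, tensorFam_apply,
    ← prod_mul_prod_compl A, ← prod_mul_prod_compl A, mul_left_comm, ← prod_mul_distrib]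
  congr 1
  · exact prod_congr rfl fun i hi => by simp [hi, Matrix.trace_single_mul]
  · refine prod_congr rfl fun i hi => ?_
    simp [mem_compl.1 hi, slotMean, Matrix.one_apply]

theorem condExp_empty (ρ : Matrix (Fin d) (Fin d) ℂ) (X : TMat d n) :
    condExp ρ ∅ X = expect ρ n X • 1 := by
  ext x y
  simp [condExp_apply, qCondExp_apply, expect_apply, Matrix.one_apply, prod_boole, funext_iff]

theorem condExp_conjTranspose {ρ : Matrix (Fin d) (Fin d) ℂ} (hρ : ρ.IsHermitian)
    (A : Finset (Fin n)) (X : TMat d n) : condExp ρ A Xᴴ = (condExp ρ A X)ᴴ := by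
  ext x y
  have adjoint_weight :
      (tensorFam (A.piecewise (fun i => Matrix.single (x i) (y i) (1 : ℂ)) fun _ => ρ))ᴴ =
        tensorFam (A.piecewise (fun i => Matrix.single (y i) (x i) 1) fun _ => ρ) := by
    rw [conjTranspose_tensorFam]
    congr 1
    ext1 i
    by_cases hi : i ∈ A <;> simp [hi, hρ.eq]
  simp only [condExp_apply, qCondExp_apply, Matrix.conjTranspose_apply, star_mul', star_prod,
    ← Matrix.trace_conjTranspose, Matrix.conjTranspose_mul, adjoint_weight]
  rw [Matrix.trace_mul_comm]
  simp [eq_comm]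

/-- The Hoeffding projection `P_A`. -/
noncomputable def hoefProj (ρ : Matrix (Fin d) (Fin d) ℂ) (A : Finset (Fin n)) :
    TMat d n →ₗ[ℂ] TMat d n :=
  ∑ B ∈ A.powerset, (-1 : ℂ) ^ (#A - #B) • condExp ρ B

theorem hoefProj_tensorFam (ρ : Matrix (Fin d) (Fin d) ℂ) (A : Finset (Fin n))
    (M : Fin n → Matrix (Fin d) (Fin d) ℂ) :
    hoefProj ρ A (tensorFam M) =
      tensorFam (A.piecewise (fun i => center ρ (M i)) fun i => slotMean ρ (M i)) := by
  simp only [hoefProj, LinearMap.sum_apply, LinearMap.smul_apply, condExp_tensorFam]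
  exact (multilinearMap_piecewise_sub (tensorMultilinear d n) M (fun i => slotMean ρ (M i)) A).symm

theorem hoefProj_conjTranspose {ρ : Matrix (Fin d) (Fin d) ℂ} (hρ : ρ.IsHermitian)
    (A : Finset (Fin n)) (X : TMat d n) : hoefProj ρ A Xᴴ = (hoefProj ρ A X)ᴴ := by
  simp [hoefProj, condExp_conjTranspose hρ, Matrix.conjTranspose_sum]

theorem sum_hoefProj (ρ : Matrix (Fin d) (Fin d) ℂ) (X : TMat d n) :
    ∑ A, hoefProj ρ A X = X := by
  rw [← LinearMap.sum_apply]
  refine LinearMap.congr_fun (tensorFam_ext (g := LinearMap.id) fun M => ?_) X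
  have center_add_slotMean :
      ((fun i => center ρ (M i)) + fun i => slotMean ρ (M i)) = M :=
    funext fun i => sub_add_cancel (M i) (slotMean ρ (M i))
  rw [LinearMap.id_apply]
  conv_rhs => rw [← center_add_slotMean, ← coe_tensorMultilinear, MultilinearMap.map_add_univ]
  simp only [LinearMap.sum_apply, hoefProj_tensorFam, coe_tensorMultilinear]

theorem corr_hoefProj_of_ne {ρ : Matrix (Fin d) (Fin d) ℂ} (hρtr : ρ.trace = 1)
    {A B : Finset (Fin n)} (hAB : A ≠ B) (X Y : TMat d n) :
    corr ρ n (hoefProj ρ A X) (hoefProj ρ B Y) = 0 := by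
  obtain ⟨i, hi⟩ : ∃ i, ¬(i ∈ A ↔ i ∈ B) := by
    by_contra! h
    exact hAB (Finset.ext h)
  suffices h : (corr ρ n).compl₁₂ (hoefProj ρ A) (hoefProj ρ B) = 0 from
    LinearMap.congr_fun₂ h X Y
  refine tensorFam_ext fun M => tensorFam_ext fun N => ?_
  rw [LinearMap.compl₁₂_apply, hoefProj_tensorFam, hoefProj_tensorFam, corr_tensorFam]
  refine prod_eq_zero (mem_univ i) ?_
  by_cases hA : i ∈ A <;> by_cases hB : i ∈ B
  · simp [hA, hB] at hi
  · simp [hA, hB, slotMean, trace_mul_center hρtr]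
  · simp [hA, hB, slotMean, trace_mul_center hρtr]
  · simp [hA, hB] at hi

theorem hoefProj_apply_of_eqOn (ρ : Matrix (Fin d) (Fin d) ℂ) {A : Finset (Fin n)}
    {x y x' y' : Fin n → Fin d} (hx : ∀ i ∈ A, x' i = x i) (hy : ∀ i ∈ A, y' i = y i)
    (hxy : ∀ i ∉ A, x' i = y' i) (X : TMat d n) :
    hoefProj ρ A X x y =
      hoefProj ρ A X x' y' * ∏ j ∈ Aᶜ, if x j = y j then 1 else 0 := by
  simp only [hoefProj, LinearMap.sum_apply, LinearMap.smul_apply, Matrix.sum_apply,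
    Matrix.smul_apply, smul_eq_mul, sum_mul, condExp_apply, qCondExp_apply]
  refine sum_congr rfl fun B hB => ?_
  have hBA : B ⊆ A := mem_powerset.1 hB
  have same_weight : B.piecewise (fun i => Matrix.single (y' i) (x' i) (1 : ℂ)) (fun _ => ρ) =
      B.piecewise (fun i => Matrix.single (y i) (x i) 1) fun _ => ρ :=
    B.piecewise_congr (fun i hi => by rw [hx i (hBA hi), hy i (hBA hi)]) fun _ _ => rfl
  have split_delta : (∏ j ∈ Bᶜ, if x j = y j then (1 : ℂ) else 0) =
      (∏ j ∈ Bᶜ, if x' j = y' j then 1 else 0) * ∏ j ∈ Aᶜ, if x j = y j then 1 else 0 := by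
    have hAB : Aᶜ ⊆ Bᶜ := compl_subset_compl.2 hBA
    rw [← prod_sdiff hAB, ← prod_sdiff hAB,
      prod_eq_one (s := Aᶜ) fun j hj => if_pos (hxy j (mem_compl.1 hj)), mul_one]
    refine congrArg (· * _) (prod_congr rfl fun j hj => ?_)
    have hjA : j ∈ A := by simpa using (mem_sdiff.1 hj).2
    rw [hx j hjA, hy j hjA]
  rw [same_weight, split_delta]
  ring

/-! ### Ampliations -/

/-- The ampliation of an operator on `(ℂ^d)^{⊗r}` along an injection `e` of the slots: it acts on
the slots in the range of `e`, the `i`-th factor on slot `e i`. Unlike in `ampl`, the injection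
need not be increasing. -/
noncomputable def amplAlong (e : Fin r ↪ Fin n) : TMat d r →ₗ[ℂ] TMat d n where
  toFun K := Matrix.of fun x y =>
    K (x ∘ e) (y ∘ e) * ∏ j ∈ (univ.map e)ᶜ, if x j = y j then (1 : ℂ) else 0
  map_add' X Y := by
    ext x y
    simp only [of_apply, Matrix.add_apply, add_mul]
  map_smul' c X := by
    ext x y
    simp only [of_apply, Matrix.smul_apply, smul_eq_mul, mul_assoc, RingHom.id_apply]

theorem amplAlong_apply (e : Fin r ↪ Fin n) (K : TMat d r) (x y : Fin n → Fin d) :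
    amplAlong e K x y =
      K (x ∘ e) (y ∘ e) * ∏ j ∈ (univ.map e)ᶜ, if x j = y j then 1 else 0 := rfl

theorem ampl_eq_amplAlong (K : TMat d r) (β : Finset (Fin n)) (hβ : #β = r) :
    ampl K β hβ = amplAlong (β.orderEmbOfFin hβ).toEmbedding K := by
  ext x y
  rw [amplAlong_apply, map_orderEmbOfFin_univ]
  rfl

theorem ampl_conjTranspose (K : TMat d r) (β : Finset (Fin n)) (hβ : #β = r) :
    ampl Kᴴ β hβ = (ampl K β hβ)ᴴ := by
  ext x y
  simp [ampl, eq_comm]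

theorem qUstat_conjTranspose (K : TMat d r) (n : ℕ) : qUstat Kᴴ n = (qUstat K n)ᴴ := by
  simp [qUstat, ampl_conjTranspose, Matrix.conjTranspose_sum]

theorem amplAlong_tensorFam (e : Fin r ↪ Fin n) (M : Fin r → Matrix (Fin d) (Fin d) ℂ) :
    amplAlong e (tensorFam M) = tensorFam (Function.extend e M 1) := by
  ext x y
  rw [amplAlong_apply, tensorFam_apply, tensorFam_apply, ← prod_mul_prod_compl (univ.map e),
    prod_map]
  congr 1
  · exact prod_congr rfl fun i _ => by rw [e.injective.extend_apply]; rfl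
  · refine prod_congr rfl fun j hj => ?_
    rw [Function.extend_apply' _ _ _ (by simpa using hj), Pi.one_apply, Matrix.one_apply]

theorem amplAlong_trans (e : Fin l ↪ Fin r) (f : Fin r ↪ Fin n) (X : TMat d l) :
    amplAlong (e.trans f) X = amplAlong f (amplAlong e X) := by
  refine LinearMap.congr_fun (g := amplAlong f ∘ₗ amplAlong e) (tensorFam_ext fun M => ?_) X
  simp only [LinearMap.comp_apply, amplAlong_tensorFam]
  rw [Function.Embedding.coe_trans]
  congr 1
  exact e.injective.extend_comp f.injective M 1

theorem corr_amplAlong {ρ : Matrix (Fin d) (Fin d) ℂ} (hρtr : ρ.trace = 1) (e : Fin r ↪ Fin n)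
    (X Y : TMat d r) : corr ρ n (amplAlong e X) (amplAlong e Y) = corr ρ r X Y := by
  suffices h : (corr ρ n).compl₁₂ (amplAlong e) (amplAlong e) = corr ρ r from
    LinearMap.congr_fun₂ h X Y
  refine tensorFam_ext fun M => tensorFam_ext fun N => ?_
  rw [LinearMap.compl₁₂_apply, amplAlong_tensorFam, amplAlong_tensorFam, corr_tensorFam,
    corr_tensorFam, ← prod_mul_prod_compl (univ.map e), prod_map]
  simp only [e.injective.extend_apply]
  rw [prod_eq_one (s := (univ.map e)ᶜ), mul_one]
  intro j hj
  have hj' : ¬∃ i, e i = j := by simpa using hj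
  simp [Function.extend_apply' _ _ _ hj', hρtr]

theorem hoefProj_map_amplAlong {ρ : Matrix (Fin d) (Fin d) ℂ} (hρtr : ρ.trace = 1)
    (e : Fin r ↪ Fin n) (A : Finset (Fin r)) (X : TMat d r) :
    hoefProj ρ (A.map e) (amplAlong e X) = amplAlong e (hoefProj ρ A X) := by
  refine LinearMap.congr_fun (f := hoefProj ρ (A.map e) ∘ₗ amplAlong e)
    (g := amplAlong e ∘ₗ hoefProj ρ A) (tensorFam_ext fun M => ?_) X
  simp only [LinearMap.comp_apply, amplAlong_tensorFam, hoefProj_tensorFam]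
  congr 1
  ext1 j
  by_cases hj : ∃ i, e i = j
  · obtain ⟨i, rfl⟩ := hj
    by_cases hi : i ∈ A <;> simp [hi, e.injective.extend_apply]
  · have hjA : j ∉ A.map e := fun h => hj ((mem_map.1 h).imp fun _ => And.right)
    simp [hjA, Function.extend_apply' _ _ _ hj, slotMean_one hρtr]

theorem hoefProj_amplAlong_eq_zero {ρ : Matrix (Fin d) (Fin d) ℂ} (hρtr : ρ.trace = 1)
    (e : Fin r ↪ Fin n) {A : Finset (Fin n)} (hA : ¬A ⊆ univ.map e) (X : TMat d r) :
    hoefProj ρ A (amplAlong e X) = 0 := by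
  obtain ⟨j, hjA, hj⟩ := not_subset.1 hA
  refine LinearMap.congr_fun (f := hoefProj ρ A ∘ₗ amplAlong e) (g := 0)
    (tensorFam_ext fun M => ?_) X
  rw [LinearMap.comp_apply, amplAlong_tensorFam, hoefProj_tensorFam]
  refine tensorFam_eq_zero (i := j) ?_
  rw [piecewise_eq_of_mem _ _ _ hjA, Function.extend_apply' _ _ _ (by simpa using hj),
    Pi.one_apply, center_one hρtr]

/-- A kernel of order `r` commuting with the permutation action of `S(r)`, stated in matrix
entries. -/
def IsSymmKernel (K : TMat d r) : Prop :=
  ∀ (τ : Equiv.Perm (Fin r)) (x y : Fin r → Fin d), K (x ∘ τ) (y ∘ τ) = K x y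

theorem IsSymmKernel.amplAlong_perm_trans {K : TMat d r} (hK : IsSymmKernel K)
    (τ : Equiv.Perm (Fin r)) (e : Fin r ↪ Fin n) :
    amplAlong (τ.toEmbedding.trans e) K = amplAlong e K := by
  ext x y
  rw [amplAlong_apply, amplAlong_apply, ← Finset.map_map, Finset.map_univ_equiv]
  exact congrArg (· * _) (hK τ (x ∘ e) (y ∘ e))

theorem exists_perm_castLEEmb_trans_eq {A β : Finset (Fin n)} (hAβ : A ⊆ β) (hA : #A = l)
    (hβ : #β = r) (h : l ≤ r) :
    ∃ τ : Equiv.Perm (Fin r),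
      (Fin.castLEEmb h).trans (τ.toEmbedding.trans (β.orderEmbOfFin hβ).toEmbedding) =
        (A.orderEmbOfFin hA).toEmbedding := by
  let g : Fin l ↪ Fin r :=
    ⟨fun i => (β.orderIsoOfFin hβ).symm ⟨A.orderEmbOfFin hA i, hAβ (A.orderEmbOfFin_mem hA i)⟩,
      fun i j hij => by simpa using hij⟩
  obtain ⟨τ, hτ⟩ :=
    (Equiv.Perm.isMultiplyPretransitive (Fin r) l).exists_smul_eq (Fin.castLEEmb h) g
  refine ⟨τ, Function.Embedding.ext fun i => ?_⟩
  have hi : τ (Fin.castLE h i) = g i := DFunLike.congr_fun hτ i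
  change β.orderEmbOfFin hβ (τ (Fin.castLE h i)) = A.orderEmbOfFin hA i
  rw [hi, ← coe_orderIsoOfFin_apply]
  exact congrArg Subtype.val ((β.orderIsoOfFin hβ).apply_symm_apply _)

/-! ### Hoeffding components -/

variable [NeZero d]

/-- Extension of a multi-index of length `l` to length `r`. The value `0` in the new slots is the
one chosen in `hoefK`, where any value would do. -/
def padZero (r : ℕ) (x : Fin l → Fin d) : Fin r → Fin d :=
  fun i => if h : (i : ℕ) < l then x ⟨i, h⟩ else 0

theorem hoefK_eq_submatrix (ρ : Matrix (Fin d) (Fin d) ℂ) (K : TMat d r) (l : ℕ) :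
    hoefK ρ K l =
      (hoefProj ρ (univ.filter fun i : Fin r => (i : ℕ) < l) K).submatrix
        (padZero (l := l) r) (padZero r) := by
  ext x y
  simp only [hoefK, hoefProj, of_apply, submatrix_apply, LinearMap.sum_apply, LinearMap.smul_apply]
  rfl

theorem hoefK_conjTranspose {ρ : Matrix (Fin d) (Fin d) ℂ} (hρ : ρ.IsHermitian) (K : TMat d r)
    (l : ℕ) : hoefK ρ Kᴴ l = (hoefK ρ K l)ᴴ := by
  rw [hoefK_eq_submatrix, hoefProj_conjTranspose hρ, ← conjTranspose_submatrix,
    ← hoefK_eq_submatrix]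

theorem hoefK_zero (ρ : Matrix (Fin d) (Fin d) ℂ) (K : TMat d r) :
    hoefK ρ K 0 = expect ρ r K • 1 := by
  ext x y
  rw [Subsingleton.elim x y]
  simp [hoefK_eq_submatrix, hoefProj, condExp_empty]

theorem amplAlong_hoefK (ρ : Matrix (Fin d) (Fin d) ℂ) (h : l ≤ r) (K : TMat d r) :
    amplAlong (Fin.castLEEmb h) (hoefK ρ K l) =
      hoefProj ρ (univ.map (Fin.castLEEmb h)) K := by
  have init_eq : (univ.filter fun i : Fin r => (i : ℕ) < l) = univ.map (Fin.castLEEmb h) := by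
    ext i
    simp only [mem_filter, mem_univ, true_and, mem_map, Fin.castLEEmb_apply]
    exact ⟨fun hi => ⟨⟨i, hi⟩, rfl⟩, fun ⟨j, hj⟩ => hj ▸ j.isLt⟩
  have pad_init (x : Fin r → Fin d) :
      ∀ i ∈ univ.map (Fin.castLEEmb h), padZero r (x ∘ Fin.castLEEmb h) i = x i := by
    intro i hi
    obtain ⟨j, -, rfl⟩ := mem_map.1 hi
    simp [padZero]
  ext x y
  rw [amplAlong_apply, hoefK_eq_submatrix, init_eq, submatrix_apply]
  refine (hoefProj_apply_of_eqOn ρ (pad_init x) (pad_init y) (fun i hi => ?_) K).symm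
  have hil : ¬(i : ℕ) < l := by simpa [← init_eq] using hi
  simp [padZero, hil]

/-- The ampliation to the slots in `A` of the Hoeffding component of order `#A` of `K`. -/
noncomputable def hoefTerm (ρ : Matrix (Fin d) (Fin d) ℂ) (K : TMat d r) (A : Finset (Fin n)) :
    TMat d n :=
  ampl (hoefK ρ K #A) A rfl

theorem ampl_hoefK (ρ : Matrix (Fin d) (Fin d) ℂ) (K : TMat d r) (A : Finset (Fin n))
    (hA : #A = l) : ampl (hoefK ρ K l) A hA = hoefTerm ρ K A := by
  subst hA
  rfl

theorem hoefTerm_eq_hoefProj_amplAlong {ρ : Matrix (Fin d) (Fin d) ℂ} (hρtr : ρ.trace = 1)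
    {A : Finset (Fin n)} {e : Fin r ↪ Fin n} (h : #A ≤ r)
    (he : (Fin.castLEEmb h).trans e = (A.orderEmbOfFin rfl).toEmbedding) (K : TMat d r) :
    hoefTerm ρ K A = hoefProj ρ A (amplAlong e K) := by
  have map_init : (univ.map (Fin.castLEEmb h)).map e = A := by
    rw [Finset.map_map, he, map_orderEmbOfFin_univ]
  calc hoefTerm ρ K A = amplAlong e (amplAlong (Fin.castLEEmb h) (hoefK ρ K #A)) := by
        rw [hoefTerm, ampl_eq_amplAlong, ← he, amplAlong_trans]
    _ = hoefProj ρ A (amplAlong e K) := by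
        rw [amplAlong_hoefK, ← hoefProj_map_amplAlong hρtr, map_init]

theorem exists_hoefTerm_eq_hoefProj {ρ : Matrix (Fin d) (Fin d) ℂ} (hρtr : ρ.trace = 1)
    (hrn : r ≤ n) (K : TMat d r) {A : Finset (Fin n)} (hA : #A ≤ r) :
    ∃ X, hoefTerm ρ K A = hoefProj ρ A X := by
  obtain ⟨β, hAβ, hβ⟩ := exists_superset_card_eq hA (by simpa using hrn)
  obtain ⟨τ, hτ⟩ := exists_perm_castLEEmb_trans_eq hAβ rfl hβ hA
  exact ⟨_, hoefTerm_eq_hoefProj_amplAlong hρtr hA hτ K⟩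

theorem corr_hoefTerm_of_ne {ρ : Matrix (Fin d) (Fin d) ℂ} (hρtr : ρ.trace = 1)
    (hrn : r ≤ n) (hrn' : r' ≤ n) (K : TMat d r) (K' : TMat d r') {A B : Finset (Fin n)}
    (hA : #A ≤ r) (hB : #B ≤ r') (hAB : A ≠ B) :
    corr ρ n (hoefTerm ρ K A) (hoefTerm ρ K' B) = 0 := by
  obtain ⟨X, hX⟩ := exists_hoefTerm_eq_hoefProj hρtr hrn K hA
  obtain ⟨Y, hY⟩ := exists_hoefTerm_eq_hoefProj hρtr hrn' K' hB
  rw [hX, hY, corr_hoefProj_of_ne hρtr hAB]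

theorem corr_hoefTerm_self {ρ : Matrix (Fin d) (Fin d) ℂ} (hρtr : ρ.trace = 1) (K : TMat d r)
    (K' : TMat d r') {A : Finset (Fin n)} (hA : #A = l) :
    corr ρ n (hoefTerm ρ K A) (hoefTerm ρ K' A) = corr ρ l (hoefK ρ K l) (hoefK ρ K' l) := by
  subst hA
  rw [hoefTerm, hoefTerm, ampl_eq_amplAlong, ampl_eq_amplAlong, corr_amplAlong hρtr]

theorem IsSymmKernel.hoefProj_ampl {ρ : Matrix (Fin d) (Fin d) ℂ} (hρtr : ρ.trace = 1)
    {K : TMat d r} (hK : IsSymmKernel K) {A β : Finset (Fin n)} (hAβ : A ⊆ β) (hβ : #β = r) :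
    hoefProj ρ A (ampl K β hβ) = hoefTerm ρ K A := by
  have hA : #A ≤ r := hβ ▸ card_le_card hAβ
  obtain ⟨τ, hτ⟩ := exists_perm_castLEEmb_trans_eq hAβ rfl hβ hA
  rw [hoefTerm_eq_hoefProj_amplAlong hρtr hA hτ, hK.amplAlong_perm_trans, ampl_eq_amplAlong]

theorem IsSymmKernel.ampl_eq_sum_hoefTerm {ρ : Matrix (Fin d) (Fin d) ℂ} (hρtr : ρ.trace = 1)
    {K : TMat d r} (hK : IsSymmKernel K) (β : Finset (Fin n)) (hβ : #β = r) :
    ampl K β hβ = ∑ A ∈ β.powerset, hoefTerm ρ K A := by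
  rw [← sum_hoefProj ρ (ampl K β hβ), ← sum_subset (subset_univ β.powerset)]
  · exact sum_congr rfl fun A hA => hK.hoefProj_ampl hρtr (mem_powerset.1 hA) hβ
  · intro A _ hA
    rw [ampl_eq_amplAlong]
    refine hoefProj_amplAlong_eq_zero hρtr _ ?_ K
    rwa [map_orderEmbOfFin_univ, ← mem_powerset]

/-! ### U-statistics -/

theorem qUstat_hoefK (ρ : Matrix (Fin d) (Fin d) ℂ) (K : TMat d r) (l n : ℕ) :
    qUstat (hoefK ρ K l) n =
      (n.choose l : ℂ)⁻¹ • ∑ A ∈ powersetCard l (univ : Finset (Fin n)), hoefTerm ρ K A := by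
  rw [qUstat, ← sum_attach (powersetCard l univ)]
  exact congrArg _ (sum_congr rfl fun A _ => ampl_hoefK ρ K A.1 _)

theorem IsSymmKernel.qUstat_eq_sum {ρ : Matrix (Fin d) (Fin d) ℂ} (hρtr : ρ.trace = 1)
    {K : TMat d r} (hK : IsSymmKernel K) (hrn : r ≤ n) :
    qUstat K n = ∑ l ∈ range (r + 1), (r.choose l : ℂ) • qUstat (hoefK ρ K l) n := by
  rw [qUstat, sum_congr rfl fun β _ => hK.ampl_eq_sum_hoefTerm hρtr β.1 _,
    sum_attach (powersetCard r (univ : Finset (Fin n)))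
      fun β => ∑ A ∈ β.powerset, hoefTerm ρ K A,
    sum_powersetCard_sum_powerset, card_univ, Fintype.card_fin, smul_sum]
  refine sum_congr rfl fun l hl => ?_
  have hlr : l ≤ r := mem_range_succ_iff.1 hl
  rw [qUstat_hoefK, smul_smul, ← Nat.cast_smul_eq_nsmul ℂ, smul_smul]
  congr 1
  have hr : (n.choose r : ℂ) ≠ 0 := Nat.cast_ne_zero.2 (Nat.choose_pos hrn).ne'
  have hl : (n.choose l : ℂ) ≠ 0 := Nat.cast_ne_zero.2 (Nat.choose_pos (hlr.trans hrn)).ne'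
  have hmul : (n.choose r : ℂ) * r.choose l = n.choose l * (n - l).choose (r - l) :=
    mod_cast Nat.choose_mul hlr
  field_simp
  linear_combination -hmul

theorem corr_qUstat_hoefK_of_ne {ρ : Matrix (Fin d) (Fin d) ℂ} (hρtr : ρ.trace = 1)
    (hrn : r ≤ n) (hrn' : r' ≤ n) (K : TMat d r) (K' : TMat d r') (hl : l ≤ r) (hl' : l' ≤ r')
    (hne : l ≠ l') :
    corr ρ n (qUstat (hoefK ρ K l) n) (qUstat (hoefK ρ K' l') n) = 0 := by
  simp only [qUstat_hoefK, map_smul, map_sum, LinearMap.smul_apply, LinearMap.sum_apply,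
    ← smul_sum]
  refine smul_eq_zero_of_right _ (smul_eq_zero_of_right _ ?_)
  refine sum_eq_zero fun B hB => sum_eq_zero fun A hA => ?_
  have hA' := (mem_powersetCard.1 hA).2
  have hB' := (mem_powersetCard.1 hB).2
  exact corr_hoefTerm_of_ne hρtr hrn hrn' K K' (hA'.trans_le hl) (hB'.trans_le hl') fun hAB =>
    hne (by rw [← hA', ← hB', hAB])

theorem corr_qUstat_hoefK_self {ρ : Matrix (Fin d) (Fin d) ℂ} (hρtr : ρ.trace = 1)
    (hrn : r ≤ n) (hrn' : r' ≤ n) (K : TMat d r) (K' : TMat d r') (hl : l ≤ r) (hl' : l ≤ r') :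
    corr ρ n (qUstat (hoefK ρ K l) n) (qUstat (hoefK ρ K' l) n) =
      (n.choose l : ℂ)⁻¹ * corr ρ l (hoefK ρ K l) (hoefK ρ K' l) := by
  have diagonal : ∀ B ∈ powersetCard l (univ : Finset (Fin n)),
      ∑ A ∈ powersetCard l univ, corr ρ n (hoefTerm ρ K A) (hoefTerm ρ K' B) =
        corr ρ l (hoefK ρ K l) (hoefK ρ K' l) := fun B hB => by
    have hB' := (mem_powersetCard.1 hB).2
    rw [sum_eq_single_of_mem B hB, corr_hoefTerm_self hρtr K K' hB']
    exact fun A hA hAB => corr_hoefTerm_of_ne hρtr hrn hrn' K K'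
      ((mem_powersetCard.1 hA).2.trans_le hl) (hB'.trans_le hl') hAB
  have hne : (n.choose l : ℂ) ≠ 0 := Nat.cast_ne_zero.2 (Nat.choose_pos (hl.trans hrn)).ne'
  simp only [qUstat_hoefK, map_smul, map_sum, LinearMap.smul_apply, LinearMap.sum_apply,
    ← smul_sum]
  rw [sum_congr rfl diagonal, sum_const, card_powersetCard, card_univ, Fintype.card_fin,
    ← Nat.cast_smul_eq_nsmul ℂ]
  simp only [smul_eq_mul, inv_mul_cancel_left₀ hne]

theorem corr_hoefK_zero {ρ : Matrix (Fin d) (Fin d) ℂ} (hρtr : ρ.trace = 1) (K : TMat d r)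
    (K' : TMat d r') :
    corr ρ 0 (hoefK ρ K 0) (hoefK ρ K' 0) = expect ρ r K * expect ρ r' K' := by
  simp [hoefK_zero, corr_apply, expect_one hρtr, mul_comm]

theorem IsSymmKernel.corr_qUstat {ρ : Matrix (Fin d) (Fin d) ℂ} (hρtr : ρ.trace = 1)
    {K K' : TMat d r} (hK : IsSymmKernel K) (hK' : IsSymmKernel K') (hrn : r ≤ n) :
    corr ρ n (qUstat K n) (qUstat K' n) =
      ∑ l ∈ range (r + 1), (r.choose l : ℂ) ^ 2 * (n.choose l : ℂ)⁻¹ *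
        corr ρ l (hoefK ρ K l) (hoefK ρ K' l) := by
  rw [hK.qUstat_eq_sum hρtr hrn, hK'.qUstat_eq_sum hρtr hrn]
  simp only [map_smul, map_sum, LinearMap.smul_apply, LinearMap.sum_apply]
  refine sum_congr rfl fun l hl => ?_
  have hlr : l ≤ r := mem_range_succ_iff.1 hl
  rw [sum_eq_single_of_mem l hl, corr_qUstat_hoefK_self hρtr hrn hrn K K' hlr hlr, smul_eq_mul,
    smul_eq_mul]
  · ring
  · intro l' hl' hne
    rw [corr_qUstat_hoefK_of_ne hρtr hrn hrn K K' (mem_range_succ_iff.1 hl') hlr hne, smul_zero]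

theorem IsSymmKernel.corr_qUstat_sub {ρ : Matrix (Fin d) (Fin d) ℂ} (hρtr : ρ.trace = 1)
    {K K' : TMat d r} (hK : IsSymmKernel K) (hK' : IsSymmKernel K') (hrn : r ≤ n) :
    corr ρ n (qUstat K n) (qUstat K' n) - expect ρ r K * expect ρ r K' =
      ∑ l ∈ Icc 1 r, (r.choose l : ℂ) ^ 2 * (n.choose l : ℂ)⁻¹ *
        corr ρ l (hoefK ρ K l) (hoefK ρ K' l) := by
  rw [hK.corr_qUstat hρtr hK' hrn, range_eq_Ico, sum_eq_sum_Ico_succ_bot r.succ_pos,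
    corr_hoefK_zero hρtr]
  simp only [Nat.choose_zero_right, Nat.cast_one, one_pow, inv_one, one_mul, zero_add,
    add_sub_cancel_left]
  rfl

theorem corr_conjTranspose_qUstat_hoefK_of_ne {ρ : Matrix (Fin d) (Fin d) ℂ}
    (hρ : ρ.IsHermitian) (hρtr : ρ.trace = 1) (hrn : r ≤ n) (hrn' : r' ≤ n) (K : TMat d r)
    (K' : TMat d r') (hl : l ≤ r) (hl' : l' ≤ r') (hne : l ≠ l') :
    corr ρ n (qUstat (hoefK ρ K l) n)ᴴ (qUstat (hoefK ρ K' l') n) = 0 := by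
  rw [← qUstat_conjTranspose, ← hoefK_conjTranspose hρ,
    corr_qUstat_hoefK_of_ne hρtr hrn hrn' Kᴴ K' hl hl' hne]

end QuantumUstat

theorem stmt9_general {d r : ℕ} [NeZero d] (ρ : Matrix (Fin d) (Fin d) ℂ)
    (hρ : ρ.IsHermitian) (hρtr : ρ.trace = 1)
    (K : Matrix (Fin r → Fin d) (Fin r → Fin d) ℂ)
    (hsym : ∀ (τ : Equiv.Perm (Fin r)) (x y : Fin r → Fin d), K (x ∘ τ) (y ∘ τ) = K x y)
    (θ : ℂ) (hθ : θ = ((tensorFam fun _ : Fin r => ρ) * K).trace) :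
    (∀ n : ℕ, r ≤ n →
      (qUstat K n = ∑ l ∈ Finset.range (r + 1), (r.choose l : ℂ) • qUstat (hoefK ρ K l) n) ∧
      (∀ l l' : ℕ, l ∈ Finset.Icc 1 r → l' ∈ Finset.Icc 1 r → l ≠ l' →
        ((tensorFam fun _ : Fin n => ρ) *
          (qUstat (hoefK ρ K l) n)ᴴ * qUstat (hoefK ρ K l') n).trace = 0) ∧
      ((tensorFam fun _ : Fin n => ρ) * (qUstat K n * qUstat K n)).trace - θ ^ 2 =
        ∑ l ∈ Finset.Icc 1 r,
          (r.choose l : ℂ) ^ 2 * (n.choose l : ℂ)⁻¹ *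
            ((tensorFam fun _ : Fin l => ρ) * (hoefK ρ K l * hoefK ρ K l)).trace) ∧
    (∀ c : ℕ,
      (∀ l : ℕ, 1 ≤ l → l < c → hoefK ρ K l = 0) →
      ∃ C : ℝ, ∀ n : ℕ, r ≤ n →
        ‖((tensorFam fun _ : Fin n => ρ) * (qUstat K n * qUstat K n)).trace - θ ^ 2‖ ≤
          C / (n : ℝ) ^ c) := by
  have hK : QuantumUstat.IsSymmKernel K := hsym
  have variance (n : ℕ) (hrn : r ≤ n) := hK.corr_qUstat_sub hρtr hK hrn
  simp only [QuantumUstat.corr_apply, QuantumUstat.expect_apply, ← hθ, ← sq θ] at variance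
  refine ⟨fun n hrn => ⟨hK.qUstat_eq_sum hρtr hrn, fun l l' hl hl' hne => ?_, ?_⟩,
    fun c hdeg => ?_⟩
  · rw [mul_assoc]
    exact QuantumUstat.corr_conjTranspose_qUstat_hoefK_of_ne hρ hρtr hrn hrn K K
      (Finset.mem_Icc.1 hl).2 (Finset.mem_Icc.1 hl').2 hne
  · exact variance n hrn
  · let a (l : ℕ) : ℂ := (r.choose l : ℂ) ^ 2 *
      ((tensorFam fun _ : Fin l => ρ) * (hoefK ρ K l * hoefK ρ K l)).trace
    have ha : ∀ l, 1 ≤ l → l < c → a l = 0 := fun l hl hlc => by simp [a, hdeg l hl hlc]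
    obtain ⟨C, hC⟩ := QuantumUstat.exists_norm_sum_inv_choose_mul_le ha r
    refine ⟨C, fun n hrn => ?_⟩
    rw [variance n hrn]
    simpa only [a, mul_assoc, mul_left_comm] using hC n hrn

/-- **Hoeffding decomposition and variance of quantum U-statistics.** -/
theorem stmt9 {d r : ℕ} [NeZero d] (ρ : Matrix (Fin d) (Fin d) ℂ)
    (hρ : ρ.PosDef) (hρtr : ρ.trace = 1)
    (K : Matrix (Fin r → Fin d) (Fin r → Fin d) ℂ)
    (hherm : K.IsHermitian)
    (hsym : ∀ (τ : Equiv.Perm (Fin r)) (x y : Fin r → Fin d), K (x ∘ τ) (y ∘ τ) = K x y)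
    (θ : ℂ) (hθ : θ = ((tensorFam fun _ : Fin r => ρ) * K).trace) :
    (∀ n : ℕ, r ≤ n →
      -- (i) decomposition into mutually orthogonal U-statistics
      (qUstat K n = ∑ l ∈ Finset.range (r + 1), (r.choose l : ℂ) • qUstat (hoefK ρ K l) n) ∧
      -- (ii) orthogonality in L²(ρ^{⊗n})
      (∀ l l' : ℕ, l ∈ Finset.Icc 1 r → l' ∈ Finset.Icc 1 r → l ≠ l' →
        ((tensorFam fun _ : Fin n => ρ) *
          (qUstat (hoefK ρ K l) n)ᴴ * qUstat (hoefK ρ K l') n).trace = 0) ∧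
      -- (iii) the variance formula
      ((tensorFam fun _ : Fin n => ρ) * (qUstat K n * qUstat K n)).trace - θ ^ 2 =
        ∑ l ∈ Finset.Icc 1 r,
          (r.choose l : ℂ) ^ 2 * (n.choose l : ℂ)⁻¹ *
            ((tensorFam fun _ : Fin l => ρ) * (hoefK ρ K l * hoefK ρ K l)).trace) ∧
    -- consequence: degenerate kernels have variance O(n^{-c})
    (∀ c : ℕ, 1 ≤ c → c ≤ r →
      (∀ l : ℕ, 1 ≤ l → l < c → hoefK ρ K l = 0) →
      ∃ C : ℝ, ∀ n : ℕ, r ≤ n →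
        ‖((tensorFam fun _ : Fin n => ρ) * (qUstat K n * qUstat K n)).trace - θ ^ 2‖ ≤
          C / (n : ℝ) ^ c) := by
  have general := stmt9_general ρ hρ.isHermitian hρtr K hsym θ hθ
  exact ⟨general.1, fun c _ _ => general.2 c⟩
end

section
/- Let K be a quantum symmetric kernel of order r with θ := Tr(ρ^{⊗r} K). Let K_1 ∈ M(ℂ^d) be its first Hoeffding projection, K_1 := Tr_{2,...,r}[ (1 ⊗ ρ^{⊗(r−1)}) K ] − θ·1 (the partial trace of (1⊗ρ^{⊗(r−1)})K over tensor slots 2,...,r), and set ξ_1 := Tr(ρ K_1²). Assume K_1 ≠ 0 (non-degenerate kernel). Then the measurement distribution of √n (U_n − θ·1) in the state ρ^{⊗n} converges weakly to the Gaussian law N(0, r² ξ_1): for every bounded continuous function f : ℝ → ℝ, lim_{n→∞} Tr( ρ^{⊗n} · f(√n (U_n − θ·1)) ) = ∫ f dN(0, r² ξ_1), where f is applied to the selfadjoint matrix √n(U_n − θ·1) via the continuous functional calculus. -/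
open scoped BigOperators
open Matrix Filter Topology MeasureTheory ProbabilityTheory
open scoped ComplexOrder

/-- The partial trace over the tensor slots `2, ..., r` of an operator on `(ℂ^d)^{⊗r}`
(keeping the first slot). -/
noncomputable def ptrRest {d r : ℕ} (hr : 0 < r)
    (N : Matrix (Fin r → Fin d) (Fin r → Fin d) ℂ) : Matrix (Fin d) (Fin d) ℂ :=
  Matrix.of fun a b =>
    ∑ g : Fin r → Fin d,
      if g ⟨0, hr⟩ = a then N g (Function.update g ⟨0, hr⟩ b) else 0

/-- The first Hoeffding projection
`K₁ := Tr_{2,...,r}[(1 ⊗ ρ^{⊗(r−1)}) K] − θ·1` of a kernel of order `r`. -/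
noncomputable def firstHoef {d r : ℕ} (hr : 0 < r) (ρ : Matrix (Fin d) (Fin d) ℂ)
    (K : Matrix (Fin r → Fin d) (Fin r → Fin d) ℂ) : Matrix (Fin d) (Fin d) ℂ :=
  ptrRest hr ((tensorFam fun j : Fin r => if j = ⟨0, hr⟩ then 1 else ρ) * K) -
    ((tensorFam fun _ : Fin r => ρ) * K).trace • (1 : Matrix (Fin d) (Fin d) ℂ)

/-!
By Hoeffding's decomposition `√n (U_n - θ) = n^(-1/2) ∑ᵢ r K₁⁽ⁱ⁾ + √n U_n(H)`, where the conditional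
expectations of the kernel `H` onto single slots vanish in the state `ρ`. The characteristic
function of the first term is the `n`-th power of that of the law of `r K₁` in `ρ`, so the classical
central limit theorem applies to it. The second term does not commute with the first; by Duhamel's
formula and the Cauchy–Schwarz inequality it is negligible as soon as the second moment of
`√n U_n(H)` in the state evolved for a time `u` by the first term tends to `0` uniformly for
bounded `u`. Since that term is a sum of one-slot operators, the evolved state is again a product
state `σ^{⊗n}`, where `σ` is `ρ` evolved by `r K₁` for the time `s = u / √n`. Pairs of disjoint
`r`-subsets contribute the square of the mean of `H` in `σ`, which is `o(s)`, pairs with one common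
element contribute its conditional expectations in `σ`, which tend to `0`, and the proportion of the
other pairs is `O(n⁻²)`. Lévy's continuity theorem concludes.
-/

section TensorFam

variable {d n : ℕ}

lemma tensorFam_mul (M N : Fin n → Matrix (Fin d) (Fin d) ℂ) :
    tensorFam (M * N) = tensorFam M * tensorFam N := by
  ext x y
  simp only [tensorFam, Matrix.mul_apply, Matrix.of_apply, Finset.prod_univ_sum,
    Fintype.piFinset_univ, Finset.prod_mul_distrib, Pi.mul_apply]

lemma tensorFam_one : tensorFam (1 : Fin n → Matrix (Fin d) (Fin d) ℂ) = 1 := by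
  ext x y
  simp [tensorFam, Matrix.one_apply, Finset.prod_ite_zero, funext_iff]

lemma conjTranspose_tensorFam (M : Fin n → Matrix (Fin d) (Fin d) ℂ) :
    (tensorFam M)ᴴ = tensorFam (star M) := by
  ext x y
  simp [tensorFam, Matrix.conjTranspose_apply, Matrix.star_apply]

lemma trace_tensorFam (M : Fin n → Matrix (Fin d) (Fin d) ℂ) :
    (tensorFam M).trace = ∏ i, (M i).trace := by
  simp only [tensorFam, Matrix.trace, Matrix.diag_apply, Matrix.of_apply, Finset.prod_univ_sum,
    Fintype.piFinset_univ]

open scoped MatrixOrder in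
lemma posSemidef_tensorFam {M : Fin n → Matrix (Fin d) (Fin d) ℂ} (hM : ∀ i, (M i).PosSemidef) :
    (tensorFam M).PosSemidef := by
  choose B hB using fun i => CStarAlgebra.nonneg_iff_eq_star_mul_self.mp (hM i).nonneg
  obtain rfl : M = star B * B := funext hB
  rw [tensorFam_mul, ← conjTranspose_tensorFam]
  exact Matrix.posSemidef_conjTranspose_mul_self _

lemma tensorFam_comp_perm (M : Fin n → Matrix (Fin d) (Fin d) ℂ) (τ : Equiv.Perm (Fin n)) :
    tensorFam (M ∘ τ) = (tensorFam M).submatrix (· ∘ ⇑τ.symm) (· ∘ ⇑τ.symm) := by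
  ext x y
  exact Fintype.prod_equiv τ _ _ fun i => by simp

lemma single_eq_smul_tensorFam (x y : Fin n → Fin d) (c : ℂ) :
    Matrix.single x y c = c • tensorFam fun i => Matrix.single (x i) (y i) (1 : ℂ) := by
  ext u v
  simp only [tensorFam, Matrix.smul_apply, Matrix.of_apply, Matrix.single_apply, smul_eq_mul,
    Finset.prod_ite_zero, Finset.prod_const_one, Finset.mem_univ, true_imp_iff, forall_and,
    mul_ite, mul_one, mul_zero, funext_iff]

@[elab_as_elim]
lemma tensorFam_induction {p : Matrix (Fin n → Fin d) (Fin n → Fin d) ℂ → Prop}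
    (add : ∀ A B, p A → p B → p (A + B)) (smul : ∀ (c : ℂ) A, p A → p (c • A))
    (tensor : ∀ M, p (tensorFam M)) (A : Matrix (Fin n → Fin d) (Fin n → Fin d) ℂ) : p A := by
  induction A using Matrix.induction_on' with
  | h_zero => simpa using smul 0 _ (tensor 1)
  | h_add A B hA hB => exact add A B hA hB
  | h_std_basis x y c => exact single_eq_smul_tensorFam x y c ▸ smul c _ (tensor _)

end TensorFam

section Ampliation

variable {d r n : ℕ}

/-- The linear map underlying `ampAlong`: the kernel acts on the slots `e 0, ..., e (r - 1)`. -/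
noncomputable def ampLinear (e : Fin r ↪ Fin n) :
    Matrix (Fin r → Fin d) (Fin r → Fin d) ℂ →ₗ[ℂ] Matrix (Fin n → Fin d) (Fin n → Fin d) ℂ where
  toFun K := Matrix.of fun x y => K (x ∘ e) (y ∘ e) *
    ∏ j ∈ (Finset.univ.map e)ᶜ, if x j = y j then (1 : ℂ) else 0
  map_add' A B := by ext x y; simp [add_mul]
  map_smul' c A := by ext x y; simp [mul_assoc]

lemma ampLinear_tensorFam (e : Fin r ↪ Fin n) (M : Fin r → Matrix (Fin d) (Fin d) ℂ) :
    ampLinear e (tensorFam M) = tensorFam (Function.extend e M 1) := by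
  ext x y
  simp only [ampLinear, tensorFam, Matrix.of_apply, Function.comp, LinearMap.coe_mk, AddHom.coe_mk]
  rw [← Finset.prod_mul_prod_compl (Finset.univ.map e), Finset.prod_map]
  congr 1
  · exact Finset.prod_congr rfl fun i _ => by rw [e.injective.extend_apply]
  · refine Finset.prod_congr rfl fun j hj => ?_
    rw [Function.extend_apply' _ _ _ (by simpa using hj), Pi.one_apply, Matrix.one_apply]

lemma ampLinear_mul (e : Fin r ↪ Fin n) (A B : Matrix (Fin r → Fin d) (Fin r → Fin d) ℂ) :
    ampLinear e (A * B) = ampLinear e A * ampLinear e B := by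
  induction A using tensorFam_induction with
  | add A A' hA hA' => simp only [map_add, add_mul, hA, hA']
  | smul c A hA => simp only [map_smul, smul_mul_assoc, hA]
  | tensor M =>
    induction B using tensorFam_induction with
    | add B B' hB hB' => simp only [map_add, mul_add, hB, hB']
    | smul c B hB => simp only [map_smul, mul_smul_comm, hB]
    | tensor N =>
      rw [← tensorFam_mul, ampLinear_tensorFam, ampLinear_tensorFam, ampLinear_tensorFam,
        ← tensorFam_mul, ← Function.extend_mul, one_mul]

/-- The ampliation of a kernel of order `r` along an embedding `e` of its slots into the `n` slots
of `(ℂ^d)^{⊗n}`. Allowing an arbitrary embedding, rather than the increasing enumeration of a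
subset as in `ampl`, also covers the operators acting on one slot. -/
noncomputable def ampAlong (e : Fin r ↪ Fin n) :
    Matrix (Fin r → Fin d) (Fin r → Fin d) ℂ →⋆ₐ[ℂ] Matrix (Fin n → Fin d) (Fin n → Fin d) ℂ where
  __ := AlgHom.ofLinearMap (ampLinear e)
    (by rw [← tensorFam_one, ampLinear_tensorFam, Function.extend_one, tensorFam_one])
    (ampLinear_mul e)
  map_star' A := by
    ext x y
    simp [ampLinear, Matrix.star_apply, apply_ite, eq_comm]

lemma ampAlong_tensorFam (e : Fin r ↪ Fin n) (M : Fin r → Matrix (Fin d) (Fin d) ℂ) :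
    ampAlong e (tensorFam M) = tensorFam (Function.extend e M 1) :=
  ampLinear_tensorFam e M

lemma ampl_eq_ampAlong (K : Matrix (Fin r → Fin d) (Fin r → Fin d) ℂ) (β : Finset (Fin n))
    (hβ : β.card = r) : ampl K β hβ = ampAlong (β.orderEmbOfFin hβ).toEmbedding K := by
  ext x y
  change _ = K _ _ * ∏ j ∈ (Finset.univ.map (β.orderEmbOfFin hβ).toEmbedding)ᶜ, _
  rw [Finset.map_orderEmbOfFin_univ]
  rfl

/-- The operator acting as `a` on the slot `i` and as the identity elsewhere. -/
noncomputable def siteOp (i : Fin n) :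
    Matrix (Fin d) (Fin d) ℂ →⋆ₐ[ℂ] Matrix (Fin n → Fin d) (Fin n → Fin d) ℂ where
  __ := (ampAlong ⟨fun _ : Fin 1 => i, Function.injective_of_subsingleton _⟩).toAlgHom.comp
    (Matrix.reindexAlgEquiv ℂ ℂ (Equiv.funUnique (Fin 1) (Fin d)).symm).toAlgHom
  map_star' a := by
    change ampAlong _ (star (Matrix.reindex _ _ a)) = _
    exact map_star _ _

lemma siteOp_eq_tensorFam (i : Fin n) (a : Matrix (Fin d) (Fin d) ℂ) :
    siteOp i a = tensorFam (Pi.mulSingle i a) := by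
  have h : a.reindex (Equiv.funUnique (Fin 1) (Fin d)).symm (Equiv.funUnique (Fin 1) (Fin d)).symm =
      tensorFam fun _ : Fin 1 => a := by
    ext x y
    simp [tensorFam]
  change ampAlong _ (a.reindex _ _) = _
  rw [h, ampAlong_tensorFam]
  congr 1
  ext1 j
  obtain rfl | hj := eq_or_ne j i
  · rw [Pi.mulSingle_eq_same]
    exact Function.Injective.extend_apply (Function.injective_of_subsingleton _) _ _ (0 : Fin 1)
  · rw [Pi.mulSingle_eq_of_ne hj]
    exact Function.extend_apply' _ _ _ fun ⟨_, h⟩ => hj h.symm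

lemma extend_mulSingle {ι κ M : Type*} [DecidableEq ι] [DecidableEq κ] [One M] (e : ι ↪ κ) (i : ι)
    (a : M) : Function.extend e (Pi.mulSingle i a) 1 = Pi.mulSingle (e i) a := by
  ext1 j
  by_cases h : ∃ k, e k = j
  · obtain ⟨k, rfl⟩ := h
    simp only [e.injective.extend_apply, Pi.mulSingle_apply, e.apply_eq_iff_eq]
  · rw [Function.extend_apply' _ _ _ h, Pi.mulSingle_eq_of_ne fun hj => h ⟨i, hj.symm⟩,
      Pi.one_apply]

lemma ampAlong_siteOp (e : Fin r ↪ Fin n) (i : Fin r) (a : Matrix (Fin d) (Fin d) ℂ) :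
    ampAlong e (siteOp i a) = siteOp (e i) a := by
  rw [siteOp_eq_tensorFam, siteOp_eq_tensorFam, ampAlong_tensorFam, extend_mulSingle]

end Ampliation

section ProductState

variable {d r n : ℕ}

/-- The expectation `Tr(σ^{⊗n} X)` of an operator `X` in the product state `σ^{⊗n}`. -/
noncomputable def iidExp (σ : Matrix (Fin d) (Fin d) ℂ) :
    Matrix (Fin n → Fin d) (Fin n → Fin d) ℂ →ₗ[ℂ] ℂ :=
  Matrix.traceLinearMap _ ℂ ℂ ∘ₗ LinearMap.mulLeft ℂ (tensorFam fun _ => σ)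

lemma iidExp_apply (σ : Matrix (Fin d) (Fin d) ℂ)
    (X : Matrix (Fin n → Fin d) (Fin n → Fin d) ℂ) :
    iidExp σ X = ((tensorFam fun _ : Fin n => σ) * X).trace := rfl

lemma iidExp_tensorFam (σ : Matrix (Fin d) (Fin d) ℂ) (M : Fin n → Matrix (Fin d) (Fin d) ℂ) :
    iidExp σ (tensorFam M) = ∏ i, (σ * M i).trace := by
  rw [iidExp_apply, ← tensorFam_mul, trace_tensorFam]
  rfl

/-- The conditional expectation onto the slot `i` of an operator on `(ℂ^d)^{⊗r}`, the other slots
being in the state `σ`. Its entries are prescribed by duality, see `trace_mul_condSlot`. -/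
noncomputable def condSlot (σ : Matrix (Fin d) (Fin d) ℂ) (i : Fin r) :
    Matrix (Fin r → Fin d) (Fin r → Fin d) ℂ →ₗ[ℂ] Matrix (Fin d) (Fin d) ℂ where
  toFun A := Matrix.of fun x y =>
    (tensorFam (Function.update (fun _ => σ) i (Matrix.single y x 1)) * A).trace
  map_add' A B := by ext; simp [mul_add]
  map_smul' c A := by ext; simp

lemma trace_tensorFam_update_mul_tensorFam (σ a : Matrix (Fin d) (Fin d) ℂ) (i : Fin r)
    (M : Fin r → Matrix (Fin d) (Fin d) ℂ) :
    (tensorFam (Function.update (fun _ => σ) i a) * tensorFam M).trace =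
      (∏ j ∈ Finset.univ.erase i, (σ * M j).trace) * (a * M i).trace := by
  rw [← tensorFam_mul, trace_tensorFam, ← Finset.prod_erase_mul _ _ (Finset.mem_univ i),
    Pi.mul_apply, Function.update_self]
  congr 1
  refine Finset.prod_congr rfl fun j hj => ?_
  rw [Pi.mul_apply, Function.update_of_ne (Finset.ne_of_mem_erase hj)]

lemma condSlot_tensorFam (σ : Matrix (Fin d) (Fin d) ℂ) (i : Fin r)
    (M : Fin r → Matrix (Fin d) (Fin d) ℂ) :
    condSlot σ i (tensorFam M) = (∏ j ∈ Finset.univ.erase i, (σ * M j).trace) • M i := by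
  ext x y
  simp only [condSlot, LinearMap.coe_mk, AddHom.coe_mk, Matrix.of_apply, Matrix.smul_apply,
    trace_tensorFam_update_mul_tensorFam, Matrix.trace_single_mul, one_mul, smul_eq_mul]

lemma trace_mul_condSlot (σ a : Matrix (Fin d) (Fin d) ℂ) (i : Fin r)
    (A : Matrix (Fin r → Fin d) (Fin r → Fin d) ℂ) :
    (a * condSlot σ i A).trace =
      (tensorFam (Function.update (fun _ => σ) i a) * A).trace := by
  induction A using tensorFam_induction with
  | add A B hA hB => simp only [map_add, mul_add, Matrix.trace_add, hA, hB]
  | smul c A hA => simp only [map_smul, mul_smul_comm, Matrix.trace_smul, hA]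
  | tensor M =>
    rw [condSlot_tensorFam, trace_tensorFam_update_mul_tensorFam, mul_smul_comm,
      Matrix.trace_smul, smul_eq_mul]

lemma iidExp_eq_trace_mul_condSlot (σ : Matrix (Fin d) (Fin d) ℂ) (i : Fin r)
    (A : Matrix (Fin r → Fin d) (Fin r → Fin d) ℂ) :
    iidExp σ A = (σ * condSlot σ i A).trace := by
  rw [trace_mul_condSlot, Function.update_eq_self i (fun _ => σ), iidExp_apply]

lemma condSlot_siteOp {σ : Matrix (Fin d) (Fin d) ℂ} (hσ : σ.trace = 1) (i j : Fin r)
    (a : Matrix (Fin d) (Fin d) ℂ) :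
    condSlot σ i (siteOp j a) = if i = j then a else (σ * a).trace • 1 := by
  rw [siteOp_eq_tensorFam, condSlot_tensorFam]
  split_ifs with h
  · subst h
    rw [Pi.mulSingle_eq_same, Finset.prod_eq_one fun j hj => ?_, one_smul]
    rw [Pi.mulSingle_eq_of_ne (Finset.ne_of_mem_erase hj), mul_one, hσ]
  · rw [Pi.mulSingle_eq_of_ne h, Finset.prod_eq_single_of_mem j (by simp [Ne.symm h]),
      Pi.mulSingle_eq_same]
    intro k _ hk
    rw [Pi.mulSingle_eq_of_ne hk, mul_one, hσ]

lemma condSlot_one {σ : Matrix (Fin d) (Fin d) ℂ} (hσ : σ.trace = 1) (i : Fin r) :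
    condSlot σ i 1 = 1 := by
  rw [← map_one (siteOp i), condSlot_siteOp hσ, if_pos rfl]

lemma condSlot_conjTranspose {σ : Matrix (Fin d) (Fin d) ℂ} (hσ : σ.IsHermitian) (i : Fin r)
    (A : Matrix (Fin r → Fin d) (Fin r → Fin d) ℂ) :
    condSlot σ i Aᴴ = (condSlot σ i A)ᴴ := by
  induction A using tensorFam_induction with
  | add A B hA hB => simp only [map_add, Matrix.conjTranspose_add, hA, hB]
  | smul c A hA => simp only [map_smul, Matrix.conjTranspose_smul, hA]
  | tensor M =>
    rw [conjTranspose_tensorFam, condSlot_tensorFam, condSlot_tensorFam, Matrix.conjTranspose_smul,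
      star_prod]
    congr 1
    refine Finset.prod_congr rfl fun j _ => ?_
    rw [← Matrix.trace_conjTranspose, Matrix.conjTranspose_mul, hσ.eq, Matrix.trace_mul_comm]
    rfl

/-- Invariance of a kernel under the natural action of the symmetric group. -/
def IsSymmetricKernel (K : Matrix (Fin r → Fin d) (Fin r → Fin d) ℂ) : Prop :=
  ∀ (τ : Equiv.Perm (Fin r)) (x y : Fin r → Fin d), K (x ∘ τ) (y ∘ τ) = K x y

lemma IsSymmetricKernel.trace_tensorFam_comp_mul {K : Matrix (Fin r → Fin d) (Fin r → Fin d) ℂ}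
    (hK : IsSymmetricKernel K) (M : Fin r → Matrix (Fin d) (Fin d) ℂ) (τ : Equiv.Perm (Fin r)) :
    (tensorFam (M ∘ τ) * K).trace = (tensorFam M * K).trace := by
  let e : (Fin r → Fin d) ≃ (Fin r → Fin d) := τ.arrowCongr (Equiv.refl _)
  have hKe : K = K.submatrix e e := by
    ext x y
    exact (hK τ.symm x y).symm
  have hMe : tensorFam (M ∘ τ) = (tensorFam M).submatrix e e := tensorFam_comp_perm M τ
  rw [hMe, hKe, Matrix.submatrix_mul_equiv, ← hKe]
  exact e.sum_comp fun x => (tensorFam M * K) x x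

lemma IsSymmetricKernel.condSlot_eq {K : Matrix (Fin r → Fin d) (Fin r → Fin d) ℂ}
    (hK : IsSymmetricKernel K) (σ : Matrix (Fin d) (Fin d) ℂ) (i j : Fin r) :
    condSlot σ i K = condSlot σ j K := by
  refine Matrix.ext_iff_trace_mul_left.2 fun a => ?_
  rw [trace_mul_condSlot, trace_mul_condSlot, ← hK.trace_tensorFam_comp_mul _ (Equiv.swap i j)]
  congr 2
  rw [Function.update_comp_equiv, Equiv.symm_swap, Equiv.swap_apply_left]
  rfl

lemma ptrRest_tensorFam (hr : 0 < r) (M : Fin r → Matrix (Fin d) (Fin d) ℂ) :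
    ptrRest hr (tensorFam M) =
      (∏ j ∈ Finset.univ.erase ⟨0, hr⟩, (M j).trace) • M ⟨0, hr⟩ := by
  ext a b
  set i₀ : Fin r := ⟨0, hr⟩
  have hterm : ∀ g : Fin r → Fin d,
      (if g i₀ = a then tensorFam M g (Function.update g i₀ b) else 0) =
        ∏ j, if j = i₀ then (if g j = a then M j a b else 0) else M j (g j) (g j) := by
    intro g
    rw [← Finset.prod_erase_mul _ _ (Finset.mem_univ i₀), if_pos rfl]
    split_ifs with hg
    · rw [tensorFam, Matrix.of_apply, ← Finset.prod_erase_mul _ _ (Finset.mem_univ i₀),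
        Function.update_self, hg]
      congr 1
      refine Finset.prod_congr rfl fun j hj => ?_
      rw [Function.update_of_ne (Finset.ne_of_mem_erase hj), if_neg (Finset.ne_of_mem_erase hj)]
    · rw [mul_zero]
  calc ptrRest hr (tensorFam M) a b
      = ∑ g : Fin r → Fin d,
          ∏ j, if j = i₀ then (if g j = a then M j a b else 0) else M j (g j) (g j) :=
        Finset.sum_congr rfl fun g _ => hterm g
    _ = ∏ j, ∑ x, if j = i₀ then (if x = a then M j a b else 0) else M j x x := by
        rw [Finset.prod_univ_sum, Fintype.piFinset_univ]
    _ = (∏ j ∈ Finset.univ.erase i₀, (M j).trace) * M i₀ a b := by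
        rw [← Finset.prod_erase_mul _ _ (Finset.mem_univ i₀)]
        congr 1
        · exact Finset.prod_congr rfl fun j hj => by
            simp only [if_neg (Finset.ne_of_mem_erase hj), Matrix.trace, Matrix.diag_apply]
        · simp

lemma ptrRest_eq_condSlot (hr : 0 < r) (σ : Matrix (Fin d) (Fin d) ℂ)
    (K : Matrix (Fin r → Fin d) (Fin r → Fin d) ℂ) :
    ptrRest hr ((tensorFam fun j : Fin r => if j = ⟨0, hr⟩ then 1 else σ) * K) =
      condSlot σ ⟨0, hr⟩ K := by
  have hadd : ∀ A B, ptrRest (d := d) hr (A + B) = ptrRest hr A + ptrRest hr B := fun A B => by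
    ext
    simp [ptrRest, Finset.sum_add_distrib, ite_add_zero]
  have hsmul : ∀ (c : ℂ) A, ptrRest (d := d) hr (c • A) = c • ptrRest hr A := fun c A => by
    ext
    simp [ptrRest, Finset.mul_sum]
  induction K using tensorFam_induction with
  | add A B hA hB => rw [mul_add, hadd, hA, hB, map_add]
  | smul c A hA => rw [mul_smul_comm, hsmul, hA, map_smul]
  | tensor M =>
    rw [← tensorFam_mul, ptrRest_tensorFam, condSlot_tensorFam, Pi.mul_apply, if_pos rfl, one_mul]
    congr 1
    refine Finset.prod_congr rfl fun j hj => ?_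
    rw [Pi.mul_apply, if_neg (Finset.ne_of_mem_erase hj)]

lemma firstHoef_eq_condSlot_sub (hr : 0 < r) (ρ : Matrix (Fin d) (Fin d) ℂ)
    (K : Matrix (Fin r → Fin d) (Fin r → Fin d) ℂ) :
    firstHoef hr ρ K = condSlot ρ ⟨0, hr⟩ K - iidExp ρ K • 1 := by
  rw [firstHoef, ptrRest_eq_condSlot, iidExp_apply]

end ProductState

section Correlations

variable {d n r r' : ℕ} {σ : Matrix (Fin d) (Fin d) ℂ}

lemma condSlot_ampAlong (hσ : σ.trace = 1) (e : Fin r ↪ Fin n) (i : Fin r)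
    (A : Matrix (Fin r → Fin d) (Fin r → Fin d) ℂ) :
    condSlot σ (e i) (ampAlong e A) = condSlot σ i A := by
  induction A using tensorFam_induction with
  | add A B hA hB => simp only [map_add, hA, hB]
  | smul c A hA => simp only [map_smul, hA]
  | tensor M =>
    rw [ampAlong_tensorFam, condSlot_tensorFam, condSlot_tensorFam, e.injective.extend_apply]
    congr 1
    refine (Finset.prod_of_injOn e e.injective.injOn (fun j hj => ?_) (fun k hk hk' => ?_)
      fun j _ => ?_).symm
    · simpa using hj
    · rw [Function.extend_apply' _ _ _ ?_, Pi.one_apply, mul_one, hσ]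
      rintro ⟨j, rfl⟩
      exact hk' ⟨j, by simpa using hk, rfl⟩
    · rw [e.injective.extend_apply]

lemma iidExp_ampAlong (hσ : σ.trace = 1) (e : Fin r ↪ Fin n)
    (A : Matrix (Fin r → Fin d) (Fin r → Fin d) ℂ) :
    iidExp σ (ampAlong e A) = iidExp σ A := by
  induction A using tensorFam_induction with
  | add A B hA hB => simp only [map_add, hA, hB]
  | smul c A hA => simp only [map_smul, hA]
  | tensor M =>
    rw [ampAlong_tensorFam, iidExp_tensorFam, iidExp_tensorFam]
    refine (Fintype.prod_of_injective e e.injective _ _ (fun j hj => ?_) fun i => ?_).symm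
    · rw [Function.extend_apply' _ _ _ hj, Pi.one_apply, mul_one, hσ]
    · rw [e.injective.extend_apply]

lemma trace_mul_extend_mul_extend (hσ : σ.trace = 1) (e : Fin r ↪ Fin n) (e' : Fin r' ↪ Fin n)
    (M : Fin r → Matrix (Fin d) (Fin d) ℂ) (N : Fin r' → Matrix (Fin d) (Fin d) ℂ) {k : Fin n}
    (hk : k ∉ Set.range e ∩ Set.range e') :
    (σ * (Function.extend e M 1 k * Function.extend e' N 1 k)).trace =
      (σ * Function.extend e M 1 k).trace * (σ * Function.extend e' N 1 k).trace := by
  by_cases h : k ∈ Set.range e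
  · rw [Function.extend_apply' N _ k fun h' => hk ⟨h, h'⟩, Pi.one_apply, mul_one, mul_one, hσ,
      mul_one]
  · rw [Function.extend_apply' M _ k h, Pi.one_apply, one_mul, mul_one, hσ, one_mul]

lemma iidExp_ampAlong_mul_ampAlong_of_disjoint (hσ : σ.trace = 1) {e : Fin r ↪ Fin n}
    {e' : Fin r' ↪ Fin n} (h : Set.range e ∩ Set.range e' = ∅)
    (A : Matrix (Fin r → Fin d) (Fin r → Fin d) ℂ)
    (B : Matrix (Fin r' → Fin d) (Fin r' → Fin d) ℂ) :
    iidExp σ (ampAlong e A * ampAlong e' B) = iidExp σ A * iidExp σ B := by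
  rw [← iidExp_ampAlong hσ e, ← iidExp_ampAlong hσ e']
  induction A using tensorFam_induction with
  | add A A' hA hA' => simp only [map_add, add_mul, hA, hA']
  | smul c A hA => simp only [map_smul, smul_mul_assoc, hA]
  | tensor M =>
    induction B using tensorFam_induction with
    | add B B' hB hB' => simp only [map_add, mul_add, hB, hB']
    | smul c B hB => simp only [map_smul, mul_smul_comm, hB]
    | tensor N =>
      simp only [ampAlong_tensorFam, ← tensorFam_mul, iidExp_tensorFam, ← Finset.prod_mul_distrib]
      exact Finset.prod_congr rfl fun k _ =>
        trace_mul_extend_mul_extend hσ e e' M N (h ▸ Set.notMem_empty k)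

lemma iidExp_ampAlong_mul_ampAlong_of_inter_eq_singleton (hσ : σ.trace = 1) {e : Fin r ↪ Fin n}
    {e' : Fin r' ↪ Fin n} {i : Fin r} {i' : Fin r'} (hi : e i = e' i')
    (h : Set.range e ∩ Set.range e' = {e i}) (A : Matrix (Fin r → Fin d) (Fin r → Fin d) ℂ)
    (B : Matrix (Fin r' → Fin d) (Fin r' → Fin d) ℂ) :
    iidExp σ (ampAlong e A * ampAlong e' B) =
      (σ * (condSlot σ i A * condSlot σ i' B)).trace := by
  rw [iidExp_eq_trace_mul_condSlot σ (e i), ← condSlot_ampAlong hσ e, ← condSlot_ampAlong hσ e',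
    ← hi]
  congr 2
  induction A using tensorFam_induction with
  | add A A' hA hA' => simp only [map_add, add_mul, hA, hA']
  | smul c A hA => simp only [map_smul, smul_mul_assoc, hA]
  | tensor M =>
    induction B using tensorFam_induction with
    | add B B' hB hB' => simp only [map_add, mul_add, hB, hB']
    | smul c B hB => simp only [map_smul, mul_smul_comm, hB]
    | tensor N =>
      simp only [ampAlong_tensorFam, ← tensorFam_mul, condSlot_tensorFam, smul_mul_smul_comm,
        ← Finset.prod_mul_distrib]
      congr 1
      refine Finset.prod_congr rfl fun k hk => trace_mul_extend_mul_extend hσ e e' M N ?_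
      rw [h]
      exact Finset.ne_of_mem_erase hk

lemma norm_trace_mul_mul_sq_le {ι : Type*} [Fintype ι] {R : Matrix ι ι ℂ}
    (hR : R.PosSemidef) (A B : Matrix ι ι ℂ) :
    ‖(R * (A * B)).trace‖ ^ 2 ≤ (R * (A * Aᴴ)).trace.re * (R * (Bᴴ * B)).trace.re := by
  let := R.toMatrixSeminormedAddCommGroup hR
  let := R.toMatrixInnerProductSpace hR
  have hinner : ∀ X Y : Matrix ι ι ℂ, inner ℂ X Y = (R * (Xᴴ * Y)).trace := fun X Y => by
    rw [← mul_assoc, Matrix.trace_mul_comm, ← mul_assoc]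
    rfl
  have hnorm : ∀ X : Matrix ι ι ℂ, ‖X‖ ^ 2 = (R * (Xᴴ * X)).trace.re := fun X => by
    rw [← hinner, ← RCLike.re_eq_complex_re, inner_self_eq_norm_sq]
  have h := norm_inner_le_norm (𝕜 := ℂ) Aᴴ B
  rw [hinner, Matrix.conjTranspose_conjTranspose] at h
  calc ‖(R * (A * B)).trace‖ ^ 2 ≤ (‖Aᴴ‖ * ‖B‖) ^ 2 := by gcongr
    _ = _ := by rw [mul_pow, hnorm, hnorm, Matrix.conjTranspose_conjTranspose]

lemma norm_iidExp_ampAlong_mul_ampAlong_le (hσ : σ.PosSemidef) (hσ1 : σ.trace = 1)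
    {H : Matrix (Fin r → Fin d) (Fin r → Fin d) ℂ} (hH : H.IsHermitian) (e e' : Fin r ↪ Fin n) :
    ‖iidExp σ (ampAlong e H * ampAlong e' H)‖ ≤ ‖iidExp σ (H * H)‖ := by
  have hstar : ∀ f : Fin r ↪ Fin n, (ampAlong f H)ᴴ = ampAlong f H := fun f => by
    rw [← Matrix.star_eq_conjTranspose, ← map_star, Matrix.star_eq_conjTranspose, hH.eq]
  have hre : ∀ f : Fin r ↪ Fin n, (iidExp σ (ampAlong f H * ampAlong f H)).re =
      (iidExp σ (H * H)).re := fun f => by rw [← map_mul, iidExp_ampAlong hσ1]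
  have hCS := norm_trace_mul_mul_sq_le (posSemidef_tensorFam fun _ : Fin n => hσ)
    (ampAlong e H) (ampAlong e' H)
  simp only [hstar, ← iidExp_apply, hre] at hCS
  rw [← pow_two, sq_le_sq, abs_norm] at hCS
  exact hCS.trans (Complex.abs_re_le_norm _)

end Correlations

section Counting

variable {α : Type*}

lemma sum_powersetCard_sum {M : Type*} [AddCommMonoid M] (s : Finset α) {r : ℕ} (hr : 0 < r)
    (f : α → M) :
    ∑ β ∈ s.powersetCard r, ∑ i ∈ β, f i = (s.card - 1).choose (r - 1) • ∑ i ∈ s, f i := by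
  classical
  rw [Finset.sum_comm' (t' := s) (s' := fun i => {β ∈ s.powersetCard r | {i} ⊆ β}),
    Finset.smul_sum]
  · refine Finset.sum_congr rfl fun i hi => ?_
    rw [Finset.sum_const, Finset.card_filter_powersetCard_subset _ _ _
      (Finset.singleton_subset_iff.2 hi) hr, Finset.card_singleton]
  · simp only [Finset.mem_powersetCard, Finset.mem_filter, Finset.singleton_subset_iff]
    grind

variable [DecidableEq α]

lemma sum_powersetCard_card_inter_choose (s : Finset α) {r m : ℕ} (hm : m ≤ r) :
    ∑ β ∈ s.powersetCard r, ∑ β' ∈ s.powersetCard r, (β ∩ β').card.choose m =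
      s.card.choose m * (s.card - m).choose (r - m) ^ 2 := by
  have hinter : ∀ β ∈ s.powersetCard r, ∀ β', (β ∩ β').card.choose m =
      ∑ γ ∈ s.powersetCard m, (if γ ⊆ β then 1 else 0) * if γ ⊆ β' then 1 else 0 := by
    intro β hβ β'
    have h : (β ∩ β').powersetCard m = {γ ∈ s.powersetCard m | γ ⊆ β ∧ γ ⊆ β'} := by
      ext γ
      have := (Finset.mem_powersetCard.1 hβ).1
      simp only [Finset.mem_powersetCard, Finset.mem_filter, Finset.subset_inter_iff]
      grind
    rw [← Finset.card_powersetCard, h, Finset.card_filter]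
    simp only [← ite_and, ite_mul, one_mul, zero_mul]
  have hcount : ∀ γ ∈ s.powersetCard m, (∑ β ∈ s.powersetCard r, if γ ⊆ β then 1 else 0) =
      (s.card - m).choose (r - m) := by
    intro γ hγ
    obtain ⟨hγs, rfl⟩ := Finset.mem_powersetCard.1 hγ
    rw [← Finset.card_filter, Finset.card_filter_powersetCard_subset _ _ _ hγs hm]
  calc ∑ β ∈ s.powersetCard r, ∑ β' ∈ s.powersetCard r, (β ∩ β').card.choose m
      = ∑ γ ∈ s.powersetCard m, (∑ β ∈ s.powersetCard r, if γ ⊆ β then 1 else 0) *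
          ∑ β' ∈ s.powersetCard r, if γ ⊆ β' then 1 else 0 := by
        simp_rw [Finset.sum_mul_sum]
        rw [Finset.sum_comm]
        simp_rw [Finset.sum_comm (s := s.powersetCard m)]
        rw [Finset.sum_comm]
        exact Finset.sum_congr rfl fun β hβ => Finset.sum_congr rfl fun β' _ => hinter β hβ β'
    _ = ∑ γ ∈ s.powersetCard m, (s.card - m).choose (r - m) ^ 2 :=
        Finset.sum_congr rfl fun γ hγ => by rw [hcount γ hγ, pow_two]
    _ = s.card.choose m * (s.card - m).choose (r - m) ^ 2 := by
        rw [Finset.sum_const, Finset.card_powersetCard, smul_eq_mul]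

lemma choose_mul_sum_powersetCard_card_inter_choose (s : Finset α) {r m : ℕ} :
    s.card.choose m * ∑ β ∈ s.powersetCard r, ∑ β' ∈ s.powersetCard r, (β ∩ β').card.choose m =
      (s.card.choose r * r.choose m) ^ 2 := by
  obtain hm | hm := le_or_gt m r
  · rw [sum_powersetCard_card_inter_choose s hm, Nat.choose_mul hm]
    ring
  · rw [Nat.choose_eq_zero_of_lt hm, Finset.sum_eq_zero fun β hβ => Finset.sum_eq_zero fun β' _ =>
      Nat.choose_eq_zero_of_lt (lt_of_le_of_lt ?_ hm)]
    · rw [mul_zero, mul_zero, zero_pow two_ne_zero]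
    · rw [← (Finset.mem_powersetCard.1 hβ).2]
      exact Finset.card_le_card Finset.inter_subset_left

end Counting

section Variance

variable {d n r : ℕ} {σ : Matrix (Fin d) (Fin d) ℂ}
  {H : Matrix (Fin r → Fin d) (Fin r → Fin d) ℂ}

/-- The increasing enumeration of the slots of an `r`-element set. -/
noncomputable def slots (β : Finset.powersetCard r (Finset.univ : Finset (Fin n))) :
    Fin r ↪ Fin n :=
  (β.1.orderEmbOfFin (Finset.mem_powersetCard.mp β.2).2).toEmbedding

lemma range_slots (β : Finset.powersetCard r (Finset.univ : Finset (Fin n))) :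
    Set.range (slots β) = β.1 :=
  Finset.range_orderEmbOfFin _ _

lemma qUstat_eq_sum_ampAlong (K : Matrix (Fin r → Fin d) (Fin r → Fin d) ℂ) (n : ℕ) :
    qUstat K n = (n.choose r : ℂ)⁻¹ • ∑ β, ampAlong (slots β) K := by
  simp only [qUstat, ampl_eq_ampAlong]
  rfl

lemma sum_sum_siteOp_slots (hr : 0 < r) (hrn : r ≤ n) (a : Matrix (Fin d) (Fin d) ℂ) :
    (n.choose r : ℂ)⁻¹ • ∑ β : Finset.powersetCard r (Finset.univ : Finset (Fin n)),
      ∑ j, siteOp (slots β j) a = ((r : ℂ) / n) • ∑ i, siteOp i a := by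
  have hslots : ∀ β : Finset.powersetCard r (Finset.univ : Finset (Fin n)),
      ∑ j, siteOp (slots β j) a = ∑ i ∈ β.1, siteOp i a := fun β => by
    rw [← Finset.map_orderEmbOfFin_univ β.1 (Finset.mem_powersetCard.mp β.2).2, Finset.sum_map]
    rfl
  have hcoeff : (n.choose r : ℂ)⁻¹ * (n - 1).choose (r - 1) = r / n := by
    obtain ⟨q, rfl⟩ := Nat.exists_eq_add_of_le' hr
    obtain ⟨m, rfl⟩ := Nat.exists_eq_add_of_le' (hr.trans_le hrn)
    have hchoose : ((m + 1).choose (q + 1) : ℂ) ≠ 0 :=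
      Nat.cast_ne_zero.2 (Nat.choose_pos hrn).ne'
    rw [inv_mul_eq_div, div_eq_div_iff hchoose (Nat.cast_ne_zero.2 m.succ_ne_zero)]
    exact_mod_cast (mul_comm _ _).trans ((Nat.add_one_mul_choose_eq m q).trans (mul_comm _ _))
  simp only [hslots]
  rw [Finset.sum_coe_sort _ fun β : Finset (Fin n) => ∑ i ∈ β, siteOp i a,
    sum_powersetCard_sum _ hr, Finset.card_univ, Fintype.card_fin, ← Nat.cast_smul_eq_nsmul ℂ,
    smul_smul, hcoeff]

lemma norm_iidExp_pair_le (hσ : σ.PosSemidef) (hσ1 : σ.trace = 1) (hH : H.IsHermitian) {b : ℝ}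
    (hb : ∀ i j, ‖(σ * (condSlot σ i H * condSlot σ j H)).trace‖ ≤ b)
    (β β' : Finset.powersetCard r (Finset.univ : Finset (Fin n))) :
    ‖iidExp σ (ampAlong (slots β) H * ampAlong (slots β') H)‖ ≤
      ‖iidExp σ H‖ ^ 2 + (β.1 ∩ β'.1).card * b +
        (β.1 ∩ β'.1).card.choose 2 * ‖iidExp σ (H * H)‖ := by
  have hinter : Set.range (slots β) ∩ Set.range (slots β') = ↑(β.1 ∩ β'.1) := by
    rw [range_slots, range_slots, Finset.coe_inter]
  obtain h0 | h1 | h2 : (β.1 ∩ β'.1).card = 0 ∨ (β.1 ∩ β'.1).card = 1 ∨ 2 ≤ (β.1 ∩ β'.1).card := by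
    omega
  · rw [Finset.card_eq_zero] at h0
    rw [h0, Finset.coe_empty] at hinter
    rw [iidExp_ampAlong_mul_ampAlong_of_disjoint hσ1 hinter, h0]
    simp [pow_two]
  · obtain ⟨c, hc⟩ := Finset.card_eq_one.1 h1
    rw [hc, Finset.coe_singleton] at hinter
    obtain ⟨⟨i, rfl⟩, i', hi'⟩ : c ∈ Set.range (slots β) ∩ Set.range (slots β') := by simp [hinter]
    rw [iidExp_ampAlong_mul_ampAlong_of_inter_eq_singleton hσ1 hi'.symm hinter, h1]
    refine (hb i i').trans ?_
    simp only [Nat.cast_one, one_mul, Nat.choose_succ_self, Nat.cast_zero, zero_mul, add_zero]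
    exact le_add_of_nonneg_left (by positivity)
  · have hb0 : 0 ≤ b := by
      obtain ⟨c, hc⟩ := Finset.card_pos.1 (zero_lt_two.trans_le h2)
      obtain ⟨⟨i, -⟩, -⟩ : c ∈ Set.range (slots β) ∩ Set.range (slots β') := by
        rw [hinter]
        exact hc
      exact (norm_nonneg _).trans (hb i i)
    have hc : (1 : ℝ) ≤ (β.1 ∩ β'.1).card.choose 2 := by
      exact_mod_cast Nat.choose_pos h2
    refine (norm_iidExp_ampAlong_mul_ampAlong_le hσ hσ1 hH _ _).trans ?_
    exact (le_mul_of_one_le_left (norm_nonneg _) hc).trans (le_add_of_nonneg_left (by positivity))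

lemma sum_card_inter_choose_eq (hrn : r ≤ n) {m : ℕ} (hm : m ≤ n) :
    ((n.choose r : ℝ) ^ 2)⁻¹ * ∑ β : Finset.powersetCard r (Finset.univ : Finset (Fin n)),
      ∑ β' : Finset.powersetCard r (Finset.univ : Finset (Fin n)),
        ((β.1 ∩ β'.1).card.choose m : ℝ) = r.choose m ^ 2 / n.choose m := by
  have h := choose_mul_sum_powersetCard_card_inter_choose (Finset.univ : Finset (Fin n))
    (r := r) (m := m)
  rw [Finset.card_univ, Fintype.card_fin] at h
  simp only [← Finset.sum_coe_sort (Finset.powersetCard r _)] at h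
  have hnr : (n.choose r : ℝ) ≠ 0 := by exact_mod_cast (Nat.choose_pos hrn).ne'
  have hnm : (n.choose m : ℝ) ≠ 0 := by exact_mod_cast (Nat.choose_pos hm).ne'
  rw [eq_div_iff hnm, inv_mul_eq_div, div_mul_eq_mul_div, div_eq_iff (pow_ne_zero 2 hnr), mul_comm,
    ← mul_pow, mul_comm (r.choose m : ℝ)]
  exact_mod_cast h

lemma norm_iidExp_qUstat_mul_self_le (hσ : σ.PosSemidef) (hσ1 : σ.trace = 1) (hH : H.IsHermitian)
    {b : ℝ} (hb : ∀ i j, ‖(σ * (condSlot σ i H * condSlot σ j H)).trace‖ ≤ b) (hrn : r ≤ n)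
    (hn : 2 ≤ n) :
    ‖iidExp σ (qUstat H n * qUstat H n)‖ ≤ ‖iidExp σ H‖ ^ 2 + r ^ 2 / n * b +
      (r.choose 2) ^ 2 / n.choose 2 * ‖iidExp σ (H * H)‖ := by
  have h0 := sum_card_inter_choose_eq hrn (Nat.zero_le n)
  have h1 := sum_card_inter_choose_eq hrn (one_le_two.trans hn)
  simp only [Nat.choose_zero_right, Nat.choose_one_right, Nat.cast_one, one_pow, div_one] at h0 h1
  calc ‖iidExp σ (qUstat H n * qUstat H n)‖
      = ((n.choose r : ℝ) ^ 2)⁻¹ * ‖∑ β, ∑ β', iidExp σ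
          (ampAlong (slots (n := n) β) H * ampAlong (slots β') H)‖ := by
        rw [qUstat_eq_sum_ampAlong, smul_mul_smul_comm, Finset.sum_mul_sum, map_smul, norm_smul]
        simp [pow_two]
    _ ≤ ((n.choose r : ℝ) ^ 2)⁻¹ * ∑ β : Finset.powersetCard r (Finset.univ : Finset (Fin n)),
          ∑ β' : Finset.powersetCard r (Finset.univ : Finset (Fin n)),
            (1 * ‖iidExp σ H‖ ^ 2 + (β.1 ∩ β'.1).card * b +
              (β.1 ∩ β'.1).card.choose 2 * ‖iidExp σ (H * H)‖) := by
        gcongr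
        refine norm_sum_le_of_le _ fun β _ => norm_sum_le_of_le _ fun β' _ => ?_
        rw [one_mul]
        exact norm_iidExp_pair_le hσ hσ1 hH hb β β'
    _ = _ := by
        simp only [Finset.sum_add_distrib, ← Finset.sum_mul, mul_add, ← mul_assoc]
        rw [h0, h1, sum_card_inter_choose_eq hrn hn, one_mul]

end Variance

section Evolution

variable {ι : Type*} [Fintype ι] [DecidableEq ι] {A : Matrix ι ι ℂ}

/-- The unitary group `t ↦ exp (i t A)` generated by the observable `A`. -/
noncomputable def evol (A : Matrix ι ι ℂ) (t : ℝ) : Matrix ι ι ℂ :=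
  NormedSpace.exp (t • Complex.I • A)

lemma evol_zero (A : Matrix ι ι ℂ) : evol A 0 = 1 := by
  rw [evol, zero_smul, NormedSpace.exp_zero]

lemma evol_smul (c : ℝ) (A : Matrix ι ι ℂ) (t : ℝ) : evol (c • A) t = evol A (c * t) := by
  rw [evol, evol, smul_comm Complex.I, smul_smul, mul_comm]

lemma evol_add_of_commute {A B : Matrix ι ι ℂ} (h : Commute A B) (t : ℝ) :
    evol (A + B) t = evol A t * evol B t := by
  rw [evol, smul_add, smul_add, Matrix.exp_add_of_commute]
  · rfl
  · exact (((h.smul_left _).smul_left _).smul_right _).smul_right _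

lemma conjTranspose_evol (hA : A.IsHermitian) (t : ℝ) : (evol A t)ᴴ = evol A (-t) := by
  rw [evol, ← Matrix.exp_conjTranspose, evol]
  simp [Matrix.conjTranspose_smul, hA.eq]

lemma evol_mul_conjTranspose_evol (hA : A.IsHermitian) (t : ℝ) : evol A t * (evol A t)ᴴ = 1 := by
  have h : evol A (-t) = (evol A t)⁻¹ := by rw [evol, neg_smul, Matrix.exp_neg, evol]
  rw [conjTranspose_evol hA, h]
  exact Matrix.mul_nonsing_inv _ ((Matrix.isUnit_iff_isUnit_det _).1 (Matrix.isUnit_exp _))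

lemma commute_evol (A : Matrix ι ι ℂ) (t : ℝ) : Commute (Complex.I • A) (evol A t) :=
  ((Commute.refl _).smul_right t).exp_right

open scoped Matrix.Norms.L2Operator in
lemma hasDerivAt_evol (A : Matrix ι ι ℂ) (t : ℝ) :
    HasDerivAt (evol A) (evol A t * (Complex.I • A)) t :=
  hasDerivAt_exp_smul_const (Complex.I • A) t

end Evolution

section ProductEvolution

variable {d n : ℕ}

lemma commute_siteOp {i j : Fin n} (h : i ≠ j) (a b : Matrix (Fin d) (Fin d) ℂ) :
    Commute (siteOp i a) (siteOp j b) := by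
  have hab : Commute (Pi.mulSingle i a : Fin n → Matrix (Fin d) (Fin d) ℂ) (Pi.mulSingle j b) :=
    Pi.mulSingle_commute (f := fun _ => Matrix (Fin d) (Fin d) ℂ) h a b
  rw [Commute, SemiconjBy, siteOp_eq_tensorFam, siteOp_eq_tensorFam, ← tensorFam_mul, hab.eq,
    tensorFam_mul]

open scoped Matrix.Norms.L2Operator in
lemma siteOp_evol (i : Fin n) (a : Matrix (Fin d) (Fin d) ℂ) (t : ℝ) :
    siteOp i (evol a t) = evol (siteOp i a) t := by
  have h : Continuous (siteOp (d := d) i) :=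
    (siteOp (d := d) i).toAlgHom.toLinearMap.continuous_of_finiteDimensional
  rw [evol, NormedSpace.map_exp_of_mem_ball (𝕂 := ℂ) (siteOp i) h _
    (by simp [NormedSpace.expSeries_radius_eq_top ℂ]), evol,
    ← Complex.coe_smul, map_smul, map_smul, Complex.coe_smul]

lemma evol_sum_siteOp (A : Fin n → Matrix (Fin d) (Fin d) ℂ) (t : ℝ) :
    evol (∑ i, siteOp i (A i)) t = tensorFam fun i => evol (A i) t := by
  suffices h : ∀ s : Finset (Fin n), evol (∑ i ∈ s, siteOp i (A i)) t =
      tensorFam fun i => if i ∈ s then evol (A i) t else 1 by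
    simpa using h Finset.univ
  intro s
  induction s using Finset.induction_on with
  | empty => simp [evol, NormedSpace.exp_zero, ← tensorFam_one, Pi.one_def]
  | insert i s hi ih =>
    rw [Finset.sum_insert hi, evol_add_of_commute, ih, ← siteOp_evol, siteOp_eq_tensorFam,
      ← tensorFam_mul]
    · congr 1
      ext1 j
      obtain rfl | hj := eq_or_ne j i
      · simp [hi]
      · simp [hj]
    · exact Commute.sum_right _ _ _ fun j hj => commute_siteOp (by rintro rfl; exact hi hj) _ _

end ProductEvolution

section Duhamel

variable {ι : Type*} [Fintype ι] [DecidableEq ι] {R S : Matrix ι ι ℂ}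

open scoped Matrix.Norms.L2Operator in
lemma hasDerivAt_trace_mul_evol_mul_evol (R S T : Matrix ι ι ℂ) (t s : ℝ) :
    HasDerivAt (fun s => (R * (evol S s * evol T (t - s))).trace)
      (R * (evol S s * ((Complex.I • (S - T)) * evol T (t - s)))).trace s := by
  have hT : HasDerivAt (fun s => evol T (t - s)) (-(Complex.I • T * evol T (t - s))) s := by
    have h := (hasDerivAt_evol T (t - s)).comp_const_sub t s
    rwa [← (commute_evol T (t - s)).eq] at h
  have h := (LinearMap.toContinuousLinearMap ((Matrix.traceLinearMap ι ℝ ℂ).comp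
    (LinearMap.mulLeft ℝ R))).hasFDerivAt.comp_hasDerivAt s ((hasDerivAt_evol S s).mul hT)
  refine h.congr_deriv (congrArg (fun X => (R * X).trace) ?_)
  rw [smul_sub]
  noncomm_ring

/-- Duhamel's formula, followed by the Cauchy–Schwarz inequality in the state `R`. -/
lemma norm_trace_evol_sub_le (hR : R.PosSemidef) (hRt : R.trace = 1) (hS : S.IsHermitian)
    (T : Matrix ι ι ℂ) {c t : ℝ} (hc : 0 ≤ c)
    (h : ∀ u, |u| ≤ |t| →
      (R * ((evol T u)ᴴ * ((S - T)ᴴ * (S - T)) * evol T u)).trace.re ≤ c ^ 2) :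
    ‖(R * evol S t).trace - (R * evol T t).trace‖ ≤ c * |t| := by
  have hbound : ∀ s ∈ Set.uIcc 0 t,
      ‖(R * (evol S s * ((Complex.I • (S - T)) * evol T (t - s)))).trace‖ ≤ c := by
    intro s hs
    refine le_of_sq_le_sq ?_ hc
    calc ‖(R * (evol S s * ((Complex.I • (S - T)) * evol T (t - s)))).trace‖ ^ 2
        = ‖(R * (evol S s * ((S - T) * evol T (t - s)))).trace‖ ^ 2 := by
          rw [smul_mul_assoc, mul_smul_comm, mul_smul_comm, Matrix.trace_smul, norm_smul,
            Complex.norm_I, one_mul]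
      _ ≤ (R * (evol S s * (evol S s)ᴴ)).trace.re *
            (R * (((S - T) * evol T (t - s))ᴴ * ((S - T) * evol T (t - s)))).trace.re :=
          norm_trace_mul_mul_sq_le hR _ _
      _ = (R * ((evol T (t - s))ᴴ * ((S - T)ᴴ * (S - T)) * evol T (t - s))).trace.re := by
          rw [evol_mul_conjTranspose_evol hS, mul_one, hRt, Complex.one_re, one_mul,
            Matrix.conjTranspose_mul]
          simp only [mul_assoc]
      _ ≤ c ^ 2 := h _ (by simpa using Set.abs_sub_right_of_mem_uIcc hs)
  have hmvt := (convex_uIcc 0 t).norm_image_sub_le_of_norm_hasDerivWithin_le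
    (fun s _ => (hasDerivAt_trace_mul_evol_mul_evol R S T t s).hasDerivWithinAt) hbound
    Set.left_mem_uIcc Set.right_mem_uIcc
  simpa [evol_zero] using hmvt

end Duhamel

section MeasurementLaw

variable {ι : Type*} [Fintype ι] [DecidableEq ι] {A R : Matrix ι ι ℂ}

/-- The law of the outcome of a measurement of the observable `A` in the state `R`: the eigenvalue
of each vector `v` of an orthonormal eigenbasis carries the mass `⟨v, R v⟩`. -/
noncomputable def measLaw (hA : A.IsHermitian) (R : Matrix ι ι ℂ) : Measure ℝ :=
  ∑ i, ENNReal.ofReal (((hA.eigenvectorUnitary : Matrix ι ι ℂ)ᴴ * R *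
    (hA.eigenvectorUnitary : Matrix ι ι ℂ)) i i).re • Measure.dirac (hA.eigenvalues i)

variable (hA : A.IsHermitian)

lemma integrable_measLaw {E : Type*} [NormedAddCommGroup E] (f : ℝ → E) :
    Integrable f (measLaw hA R) :=
  integrable_finsetSum_measure.2 fun _ _ =>
    (integrable_dirac (by simp)).smul_measure ENNReal.ofReal_ne_top

lemma trace_mul_conjStarAlgAut_diagonal (hR : R.PosSemidef) (f : ℝ → ℂ) :
    (R * Unitary.conjStarAlgAut ℂ _ hA.eigenvectorUnitary
      (Matrix.diagonal fun i => f (hA.eigenvalues i))).trace = ∫ x, f x ∂(measLaw hA R) := by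
  have hweight : ∀ i, 0 ≤ ((hA.eigenvectorUnitary : Matrix ι ι ℂ)ᴴ * R *
      (hA.eigenvectorUnitary : Matrix ι ι ℂ)) i i := fun i =>
    (hR.conjTranspose_mul_mul_same _).diag_nonneg
  rw [measLaw, integral_finsetSum_measure fun _ _ =>
    (integrable_dirac (by simp)).smul_measure ENNReal.ofReal_ne_top, Unitary.conjStarAlgAut_apply,
    ← mul_assoc, Matrix.trace_mul_comm, ← mul_assoc, ← mul_assoc, Matrix.trace]
  refine Finset.sum_congr rfl fun i _ => ?_
  rw [integral_smul_measure, integral_dirac, ENNReal.toReal_ofReal (Complex.le_def.1 (hweight i)).1,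
    Matrix.diag_apply, Matrix.mul_diagonal, Complex.real_smul]
  exact congrArg (· * f _) (Complex.eq_re_of_ofReal_le (hweight i))

lemma trace_mul_cfc (hR : R.PosSemidef) (f : ℝ → ℝ) :
    (R * cfc f A).trace = ((∫ x, f x ∂(measLaw hA R) : ℝ) : ℂ) := by
  rw [hA.cfc_eq, Matrix.IsHermitian.cfc, ← integral_complex_ofReal]
  exact trace_mul_conjStarAlgAut_diagonal hA hR fun x => (f x : ℂ)

lemma integral_id_measLaw (hR : R.PosSemidef) :
    ((∫ x, x ∂(measLaw hA R) : ℝ) : ℂ) = (R * A).trace := by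
  rw [← trace_mul_cfc hA hR fun x => x, cfc_id' ℝ A]

lemma integral_sq_measLaw (hR : R.PosSemidef) :
    ((∫ x, x ^ 2 ∂(measLaw hA R) : ℝ) : ℂ) = (R * (A * A)).trace := by
  rw [← trace_mul_cfc hA hR fun x => x ^ 2, cfc_pow_id A 2, pow_two]

lemma evol_eq_conjStarAlgAut_diagonal (t : ℝ) :
    evol A t = Unitary.conjStarAlgAut ℂ _ hA.eigenvectorUnitary
      (Matrix.diagonal fun i => Complex.exp (t * hA.eigenvalues i * Complex.I)) := by
  have hgen : t • Complex.I • A = Unitary.conjStarAlgAut ℂ _ hA.eigenvectorUnitary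
      (Matrix.diagonal fun i => t * hA.eigenvalues i * Complex.I) := by
    conv_lhs => rw [hA.spectral_theorem, ← map_smul, ← Complex.coe_smul, ← map_smul]
    congr 1
    ext i j
    simp [Matrix.diagonal_apply, mul_comm, mul_left_comm]
  have hunit : IsUnit (hA.eigenvectorUnitary : Matrix ι ι ℂ) :=
    (Unitary.toUnits hA.eigenvectorUnitary).isUnit
  have hinv : ((hA.eigenvectorUnitary : Matrix ι ι ℂ))⁻¹ =
      star (hA.eigenvectorUnitary : Matrix ι ι ℂ) :=
    Matrix.inv_eq_left_inv (Unitary.coe_star_mul_self _)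
  rw [evol, hgen, Unitary.conjStarAlgAut_apply, ← hinv,
    Matrix.exp_conj _ _ hunit, Matrix.exp_diagonal,
    Pi.exp_def, hinv, Unitary.conjStarAlgAut_apply, Complex.exp_eq_exp_ℂ]

lemma charFun_measLaw (hR : R.PosSemidef) (t : ℝ) :
    charFun (measLaw hA R) t = (R * evol A t).trace := by
  rw [charFun_apply_real, evol_eq_conjStarAlgAut_diagonal hA]
  exact (trace_mul_conjStarAlgAut_diagonal hA hR fun x => Complex.exp (t * x * Complex.I)).symm

lemma isProbabilityMeasure_measLaw (hR : R.PosSemidef) (hRt : R.trace = 1) :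
    IsProbabilityMeasure (measLaw hA R) := by
  have : IsFiniteMeasure (measLaw hA R) :=
    (integrable_const_iff_isFiniteMeasure (one_ne_zero (α := ℝ))).1 (integrable_measLaw hA _)
  have h := charFun_measLaw hA hR 0
  rw [evol_zero, mul_one, hRt, charFun_zero, Complex.ofReal_eq_one, measureReal_def,
    ENNReal.toReal_eq_one_iff] at h
  exact ⟨h⟩

end MeasurementLaw

section CentralLimit

lemma tendsto_charFun_inv_sqrt_mul_pow_gaussianReal {μ : Measure ℝ} [IsProbabilityMeasure μ]
    (hμ : MemLp id 2 μ) (hmean : ∫ x, x ∂μ = 0) (t : ℝ) :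
    Tendsto (fun n : ℕ => charFun μ ((√n)⁻¹ * t) ^ n) atTop
      (𝓝 (charFun (gaussianReal 0 (∫ x, x ^ 2 ∂μ).toNNReal) t)) := by
  obtain ⟨Ω, _, P, X, -, hX, hindep, _⟩ := exists_iid ℕ μ
  have hident : ∀ i, IdentDistrib (X i) (X 0) P P := fun i => (hX i).identDistrib (hX 0)
  have hmean' : P[X 0] = 0 := by rw [(hX 0).integral_eq, hmean]
  have hvar : Var[X 0; P] = ∫ x, x ^ 2 ∂μ := by
    rw [(hX 0).variance_eq, variance_of_integral_eq_zero aemeasurable_id hmean]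
    rfl
  have hmem : MemLp (X 0) 2 P := by
    rw [← (hX 0).map_eq] at hμ
    exact hμ.comp_of_map (hX 0).aemeasurable
  have hclt := tendstoInDistribution_inv_sqrt_mul_sum_sub HasLaw.id hmem hindep hident
  have h := ProbabilityMeasure.tendsto_iff_tendsto_charFun.1 hclt.tendsto t
  simp only [hmean', mul_zero, sub_zero, hvar] at h
  simpa [charFun_inv_sqrt_mul_sum hindep hident, (hX 0).map_eq] using h

end CentralLimit

section EvolvedState

variable {d n r : ℕ} {A ρ : Matrix (Fin d) (Fin d) ℂ} {H : Matrix (Fin r → Fin d) (Fin r → Fin d) ℂ}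

/-- The state `ρ` at time `s` in the Schrödinger picture of the evolution generated by `A`. -/
noncomputable def evolState (A ρ : Matrix (Fin d) (Fin d) ℂ) (s : ℝ) : Matrix (Fin d) (Fin d) ℂ :=
  evol A s * ρ * (evol A s)ᴴ

lemma evolState_zero (A ρ : Matrix (Fin d) (Fin d) ℂ) : evolState A ρ 0 = ρ := by
  rw [evolState, evol_zero, Matrix.conjTranspose_one, one_mul, mul_one]

lemma posSemidef_evolState (A : Matrix (Fin d) (Fin d) ℂ) (hρ : ρ.PosSemidef) (s : ℝ) :
    (evolState A ρ s).PosSemidef :=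
  hρ.mul_mul_conjTranspose_same _

lemma trace_evolState (hA : A.IsHermitian) (ρ : Matrix (Fin d) (Fin d) ℂ) (s : ℝ) :
    (evolState A ρ s).trace = ρ.trace := by
  rw [evolState, mul_assoc, Matrix.trace_mul_comm, mul_assoc,
    mul_eq_one_comm.1 (evol_mul_conjTranspose_evol hA s), mul_one]

lemma iidExp_conj_tensorFam (σ v : Matrix (Fin d) (Fin d) ℂ)
    (X : Matrix (Fin n → Fin d) (Fin n → Fin d) ℂ) :
    iidExp σ ((tensorFam fun _ => v)ᴴ * X * tensorFam fun _ => v) = iidExp (v * σ * vᴴ) X := by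
  have h : (tensorFam fun _ : Fin n => v * σ * vᴴ) =
      (tensorFam fun _ => v) * (tensorFam fun _ => σ) * (tensorFam fun _ => v)ᴴ := by
    rw [conjTranspose_tensorFam, ← tensorFam_mul, ← tensorFam_mul]
    rfl
  rw [iidExp_apply, iidExp_apply, h, ← mul_assoc, Matrix.trace_mul_comm]
  simp only [mul_assoc]

open scoped Matrix.Norms.L2Operator in
lemma differentiableAt_evolState (hA : A.IsHermitian) (ρ : Matrix (Fin d) (Fin d) ℂ) (s : ℝ) :
    DifferentiableAt ℝ (evolState A ρ) s := by
  have h : evolState A ρ = fun s => evol A s * ρ * evol A (-s) :=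
    funext fun s => by rw [evolState, conjTranspose_evol hA]
  rw [h]
  have hd : Differentiable ℝ (evol A) := fun u => (hasDerivAt_evol A u).differentiableAt
  fun_prop

open scoped Matrix.Norms.L2Operator in
lemma hasDerivAt_iidExp {σ : ℝ → Matrix (Fin d) (Fin d) ℂ} {σ' : Matrix (Fin d) (Fin d) ℂ} {s : ℝ}
    (hσ : HasDerivAt σ σ' s) (X : Matrix (Fin n → Fin d) (Fin n → Fin d) ℂ) :
    HasDerivAt (fun u => iidExp (σ u) X) (∑ i, (σ' * condSlot (σ s) i X).trace) s := by
  induction X using tensorFam_induction with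
  | add X Y hX hY => simpa [mul_add, Finset.sum_add_distrib] using hX.fun_add hY
  | smul c X hX => simpa [Finset.mul_sum] using hX.const_mul c
  | tensor M =>
    have htrace : ∀ i, HasDerivAt (fun u => (σ u * M i).trace) (σ' * M i).trace s := fun i =>
      (LinearMap.toContinuousLinearMap ((Matrix.traceLinearMap (Fin d) ℝ ℂ).comp
        (LinearMap.mulRight ℝ (M i)))).hasFDerivAt.comp_hasDerivAt s hσ
    simp only [iidExp_tensorFam, condSlot_tensorFam, mul_smul_comm, Matrix.trace_smul]
    exact HasDerivAt.fun_finsetProd fun i _ => htrace i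

lemma continuous_iidExp (X : Matrix (Fin n → Fin d) (Fin n → Fin d) ℂ) :
    Continuous fun σ => iidExp σ X := by
  induction X using tensorFam_induction with
  | add X Y hX hY => simpa only [map_add] using hX.fun_add hY
  | smul c X hX => simpa only [map_smul] using hX.fun_const_smul c
  | tensor M =>
    simp only [iidExp_tensorFam]
    fun_prop

lemma continuous_condSlot (i : Fin r) (X : Matrix (Fin r → Fin d) (Fin r → Fin d) ℂ) :
    Continuous fun σ => condSlot σ i X := by
  induction X using tensorFam_induction with
  | add X Y hX hY => simpa only [map_add] using hX.fun_add hY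
  | smul c X hX => simpa only [map_smul] using hX.fun_const_smul c
  | tensor M =>
    simp only [condSlot_tensorFam]
    fun_prop

open scoped Matrix.Norms.L2Operator in
lemma isLittleO_iidExp_evolState (hA : A.IsHermitian) (hH : iidExp ρ H = 0)
    (hH' : ∀ i, condSlot ρ i H = 0) :
    (fun s => iidExp (evolState A ρ s) H) =o[𝓝 0] fun s : ℝ => s := by
  have h := (hasDerivAt_iidExp (differentiableAt_evolState hA ρ 0).hasDerivAt H).isLittleO
  simpa [evolState_zero, hH, hH'] using h

open scoped Matrix.Norms.L2Operator in
lemma tendsto_evolState_nhds_zero (hA : A.IsHermitian) (ρ : Matrix (Fin d) (Fin d) ℂ) :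
    Tendsto (evolState A ρ) (𝓝 0) (𝓝 ρ) := by
  have h := (differentiableAt_evolState hA ρ 0).continuousAt.tendsto
  rwa [evolState_zero] at h

end EvolvedState

section Hoeffding

variable {d r n : ℕ} (hr : 0 < r) {ρ : Matrix (Fin d) (Fin d) ℂ}
  {K : Matrix (Fin r → Fin d) (Fin r → Fin d) ℂ}

lemma iidExp_conjTranspose (hρ : ρ.IsHermitian) (X : Matrix (Fin n → Fin d) (Fin n → Fin d) ℂ) :
    iidExp ρ Xᴴ = star (iidExp ρ X) := by
  rw [iidExp_apply, iidExp_apply, ← Matrix.trace_conjTranspose, Matrix.conjTranspose_mul,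
    conjTranspose_tensorFam, Matrix.trace_mul_comm]
  simp only [Pi.star_def, Matrix.star_eq_conjTranspose, hρ.eq]

lemma isHermitian_iidExp_smul_one (hρ : ρ.IsHermitian)
    {X : Matrix (Fin n → Fin d) (Fin n → Fin d) ℂ} (hX : X.IsHermitian) {ι : Type*}
    [DecidableEq ι] : (iidExp ρ X • (1 : Matrix ι ι ℂ)).IsHermitian := by
  rw [Matrix.IsHermitian, Matrix.conjTranspose_smul, ← iidExp_conjTranspose hρ, hX.eq,
    Matrix.conjTranspose_one]

lemma trace_mul_firstHoef (hρ : ρ.trace = 1) (K : Matrix (Fin r → Fin d) (Fin r → Fin d) ℂ) :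
    (ρ * firstHoef hr ρ K).trace = 0 := by
  rw [firstHoef_eq_condSlot_sub, mul_sub, Matrix.trace_sub, ← iidExp_eq_trace_mul_condSlot,
    mul_smul_comm, mul_one, Matrix.trace_smul, hρ, smul_eq_mul, mul_one, sub_self]

lemma isHermitian_firstHoef (hρ : ρ.IsHermitian) (hK : K.IsHermitian) :
    (firstHoef hr ρ K).IsHermitian := by
  rw [firstHoef_eq_condSlot_sub]
  refine .sub ?_ (isHermitian_iidExp_smul_one hρ hK)
  rw [Matrix.IsHermitian, ← condSlot_conjTranspose hρ, hK.eq]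

/-- The part of a kernel lying above the first order in its Hoeffding decomposition. -/
noncomputable def higherHoef (ρ : Matrix (Fin d) (Fin d) ℂ)
    (K : Matrix (Fin r → Fin d) (Fin r → Fin d) ℂ) : Matrix (Fin r → Fin d) (Fin r → Fin d) ℂ :=
  K - iidExp ρ K • 1 - ∑ j, siteOp j (firstHoef hr ρ K)

lemma isHermitian_higherHoef (hρ : ρ.IsHermitian) (hK : K.IsHermitian) :
    (higherHoef hr ρ K).IsHermitian :=
  (hK.sub (isHermitian_iidExp_smul_one hρ hK)).sub <|
    isSelfAdjoint_sum _ fun j _ => (isHermitian_firstHoef hr hρ hK).isSelfAdjoint.map (siteOp j)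

lemma condSlot_higherHoef (hρ : ρ.trace = 1) (hK : IsSymmetricKernel K) (i : Fin r) :
    condSlot ρ i (higherHoef hr ρ K) = 0 := by
  have hsites : ∑ j, condSlot ρ i (siteOp j (firstHoef hr ρ K)) = firstHoef hr ρ K := by
    simp [condSlot_siteOp hρ, trace_mul_firstHoef hr hρ]
  rw [higherHoef, map_sub, map_sub, map_smul, map_sum, hsites, condSlot_one hρ,
    hK.condSlot_eq ρ i ⟨0, hr⟩, firstHoef_eq_condSlot_sub, sub_self]

lemma iidExp_higherHoef (hρ : ρ.trace = 1) (hK : IsSymmetricKernel K) :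
    iidExp ρ (higherHoef hr ρ K) = 0 := by
  rw [iidExp_eq_trace_mul_condSlot ρ ⟨0, hr⟩, condSlot_higherHoef hr hρ hK, mul_zero,
    Matrix.trace_zero]

lemma isHermitian_qUstat (hK : K.IsHermitian) (n : ℕ) : (qUstat K n).IsHermitian := by
  rw [Matrix.IsHermitian, qUstat_eq_sum_ampAlong, Matrix.conjTranspose_smul,
    Matrix.conjTranspose_sum, star_inv₀, star_natCast]
  simp only [← Matrix.star_eq_conjTranspose, ← map_star]
  rw [Matrix.star_eq_conjTranspose, hK.eq]

lemma qUstat_higherHoef (hrn : r ≤ n) (ρ : Matrix (Fin d) (Fin d) ℂ)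
    (K : Matrix (Fin r → Fin d) (Fin r → Fin d) ℂ) :
    qUstat (higherHoef hr ρ K) n =
      qUstat K n - iidExp ρ K • 1 - ((r : ℂ) / n) • ∑ i, siteOp i (firstHoef hr ρ K) := by
  have hchoose : (n.choose r : ℂ) ≠ 0 := Nat.cast_ne_zero.2 (Nat.choose_pos hrn).ne'
  simp only [qUstat_eq_sum_ampAlong, higherHoef, map_sub, map_smul, map_one, map_sum,
    ampAlong_siteOp, Finset.sum_sub_distrib, smul_sub, sum_sum_siteOp_slots hr hrn]
  rw [Finset.sum_const, Finset.card_univ, Fintype.card_coe, Finset.card_powersetCard,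
    Finset.card_univ, Fintype.card_fin, ← Nat.cast_smul_eq_nsmul ℂ, inv_smul_smul₀ hchoose]

end Hoeffding

section Remainder

variable {d r : ℕ} {A ρ : Matrix (Fin d) (Fin d) ℂ} {H : Matrix (Fin r → Fin d) (Fin r → Fin d) ℂ}

lemma isBigO_one_snd_prod_principal {α : Type*} (l : Filter α) (T : ℝ) :
    (fun p : α × ℝ => p.2) =O[l ×ˢ 𝓟 {u | |u| ≤ T}] fun _ => (1 : ℝ) := by
  refine .of_bound T ?_
  filter_upwards [tendsto_snd.eventually (eventually_principal.2 fun u (hu : |u| ≤ T) => hu)]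
    with p hp
  simpa using hp

lemma tendsto_inv_sqrt_mul_prod_principal (T : ℝ) :
    Tendsto (fun p : ℕ × ℝ => (√p.1)⁻¹ * p.2) (atTop ×ˢ 𝓟 {u | |u| ≤ T}) (𝓝 0) := by
  have hsqrt : Tendsto (fun p : ℕ × ℝ => (√p.1)⁻¹) (atTop ×ˢ 𝓟 {u | |u| ≤ T}) (𝓝 0) :=
    tendsto_inv_atTop_zero.comp <| Real.tendsto_sqrt_atTop.comp <|
      tendsto_natCast_atTop_atTop.comp tendsto_fst
  have h := (Asymptotics.isLittleO_one_iff ℝ).2 hsqrt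
  simpa using h.mul_isBigO (isBigO_one_snd_prod_principal atTop T)

lemma tendsto_nat_mul_norm_iidExp_evolState_sq (hA : A.IsHermitian) (hH : iidExp ρ H = 0)
    (hH' : ∀ i, condSlot ρ i H = 0) (T : ℝ) :
    Tendsto (fun p : ℕ × ℝ => p.1 * ‖iidExp (evolState A ρ ((√p.1)⁻¹ * p.2)) H‖ ^ 2)
      (atTop ×ˢ 𝓟 {u | |u| ≤ T}) (𝓝 0) := by
  have hmean := ((isLittleO_iidExp_evolState hA hH hH').comp_tendsto
    (tendsto_inv_sqrt_mul_prod_principal T)).norm_left.pow two_pos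
  have hscale : (fun p : ℕ × ℝ => (p.1 : ℝ) * ((√p.1)⁻¹ * p.2) ^ 2) =ᶠ[atTop ×ˢ 𝓟 {u | |u| ≤ T}]
      fun p => p.2 ^ 2 := by
    filter_upwards [tendsto_fst.eventually (eventually_gt_atTop 0)] with p hp
    have : (0 : ℝ) < p.1 := Nat.cast_pos.2 hp
    rw [mul_pow, inv_pow, Real.sq_sqrt this.le]
    field_simp
  have hbounded := hscale.trans_isBigO ((isBigO_one_snd_prod_principal atTop T).pow 2)
  simp only [one_pow] at hbounded
  exact (Asymptotics.isLittleO_one_iff ℝ).1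
    (((Asymptotics.isBigO_refl _ _).mul_isLittleO hmean).trans_isBigO hbounded)

lemma tendsto_nat_mul_inv_choose_two : Tendsto (fun n : ℕ => (n : ℝ) * (n.choose 2 : ℝ)⁻¹) atTop
    (𝓝 0) := by
  have h : Tendsto (fun n : ℕ => 2 / ((n : ℝ) - 1)) atTop (𝓝 0) :=
    (tendsto_atTop_add_const_right _ _ tendsto_natCast_atTop_atTop).const_div_atTop _
  refine h.congr' ?_
  filter_upwards [eventually_gt_atTop 0] with n hn
  rw [Nat.cast_choose_two]
  field_simp

lemma tendsto_sum_norm_trace_mul_condSlot_mul_condSlot (hH' : ∀ i, condSlot ρ i H = 0) :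
    Tendsto (fun σ => ∑ ij : Fin r × Fin r,
      ‖(σ * (condSlot σ ij.1 H * condSlot σ ij.2 H)).trace‖) (𝓝 ρ) (𝓝 0) := by
  have hcont : Continuous fun σ => ∑ ij : Fin r × Fin r,
      ‖(σ * (condSlot σ ij.1 H * condSlot σ ij.2 H)).trace‖ :=
    continuous_finsetSum _ fun ij _ => (continuous_id.matrix_mul
      ((continuous_condSlot ij.1 H).matrix_mul (continuous_condSlot ij.2 H))).matrix_trace.norm
  simpa [hH'] using hcont.tendsto ρ

lemma tendsto_nat_mul_norm_iidExp_evolState_qUstat_sq (hA : A.IsHermitian) (hρ : ρ.PosSemidef)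
    (hρ1 : ρ.trace = 1) (hHh : H.IsHermitian) (hH : iidExp ρ H = 0)
    (hH' : ∀ i, condSlot ρ i H = 0) (T : ℝ) :
    Tendsto (fun p : ℕ × ℝ =>
        p.1 * ‖iidExp (evolState A ρ ((√p.1)⁻¹ * p.2)) (qUstat H p.1 * qUstat H p.1)‖)
      (atTop ×ˢ 𝓟 {u | |u| ≤ T}) (𝓝 0) := by
  have hstate := (tendsto_evolState_nhds_zero hA ρ).comp (tendsto_inv_sqrt_mul_prod_principal T)
  have hmean := tendsto_nat_mul_norm_iidExp_evolState_sq hA hH hH' T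
  have hcond := ((tendsto_sum_norm_trace_mul_condSlot_mul_condSlot hH').comp hstate).const_mul
    ((r : ℝ) ^ 2)
  have hsecond := ((tendsto_nat_mul_inv_choose_two.comp tendsto_fst).mul
    (((continuous_iidExp (H * H)).tendsto ρ).comp hstate).norm).const_mul ((r.choose 2 : ℝ) ^ 2)
  have hlim := (hmean.add hcond).add hsecond
  simp only [mul_zero, zero_mul, add_zero] at hlim
  refine squeeze_zero' (.of_forall fun p => by positivity) ?_ hlim
  filter_upwards [tendsto_fst.eventually (eventually_ge_atTop (max r 2))] with p hp
  have hn : (p.1 : ℝ) ≠ 0 := Nat.cast_ne_zero.2 (by have := le_of_max_le_right hp; omega)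
  have hle (σ : Matrix (Fin d) (Fin d) ℂ) (i j : Fin r) :=
    Finset.single_le_sum (f := fun ij : Fin r × Fin r =>
      ‖(σ * (condSlot σ ij.1 H * condSlot σ ij.2 H)).trace‖) (fun _ _ => norm_nonneg _)
      (Finset.mem_univ (i, j))
  refine (mul_le_mul_of_nonneg_left (norm_iidExp_qUstat_mul_self_le
    (posSemidef_evolState A hρ _) ((trace_evolState hA ρ _).trans hρ1) hHh
    (hle _) (le_of_max_le_left hp) (le_of_max_le_right hp)) p.1.cast_nonneg).trans_eq ?_
  simp only [Function.comp_apply]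
  field_simp

lemma tendsto_iidExp_evol_sub (hA : A.IsHermitian) (hρ : ρ.PosSemidef) (hρ1 : ρ.trace = 1)
    (hHh : H.IsHermitian) (hH : iidExp ρ H = 0) (hH' : ∀ i, condSlot ρ i H = 0) (t : ℝ) :
    Tendsto (fun n : ℕ =>
      iidExp ρ (evol ((√n)⁻¹ • ∑ i : Fin n, siteOp i A + √n • qUstat H n) t) -
        (ρ * evol A ((√n)⁻¹ * t)).trace ^ n) atTop (𝓝 0) := by
  rw [Metric.tendsto_nhds]
  intro ε hε
  obtain ⟨c, hc, hct⟩ := exists_pos_mul_lt hε |t|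
  have hsmall := eventually_prod_principal_iff.1 <|
    (tendsto_nat_mul_norm_iidExp_evolState_qUstat_sq hA hρ hρ1 hHh hH hH' |t|).eventually_le_const
      (pow_pos hc 2)
  filter_upwards [hsmall] with n hn
  set L := (√n)⁻¹ • ∑ i : Fin n, siteOp i A with hL
  have hevol (u : ℝ) : evol L u = tensorFam fun _ => evol A ((√n)⁻¹ * u) := by
    rw [hL, evol_smul, evol_sum_siteOp]
  have hLh : L.IsHermitian := (IsSelfAdjoint.all _).smul
    (isSelfAdjoint_sum _ fun i _ => hA.isSelfAdjoint.map (siteOp i))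
  have hUh : (√n • qUstat H n).IsHermitian :=
    (IsSelfAdjoint.all _).smul (isHermitian_qUstat hHh n).isSelfAdjoint
  have hpow : (ρ * evol A ((√n)⁻¹ * t)).trace ^ n = iidExp ρ (evol L t) := by
    rw [hevol, iidExp_tensorFam, Finset.prod_const, Finset.card_univ, Fintype.card_fin]
  rw [dist_zero_right, hpow]
  refine (norm_trace_evol_sub_le (posSemidef_tensorFam fun _ => hρ) (by simp [trace_tensorFam, hρ1])
    (hLh.add hUh) L hc.le fun u hu => ?_).trans_lt (mul_comm c |t| ▸ hct)
  have hsq : (√n • qUstat H n)ᴴ * (√n • qUstat H n) = (n : ℂ) • (qUstat H n * qUstat H n) := by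
    rw [hUh.eq, smul_mul_smul_comm, Real.mul_self_sqrt n.cast_nonneg, ← Complex.coe_smul,
      Complex.ofReal_natCast]
  rw [← iidExp_apply, add_sub_cancel_left, hevol, iidExp_conj_tensorFam, hsq, map_smul]
  refine (Complex.re_le_norm _).trans ?_
  rw [norm_smul, Complex.norm_natCast]
  exact hn u hu

end Remainder

section Convergence

lemma tendsto_trace_mul_cfc {ι : ℕ → Type*} [∀ n, Fintype (ι n)] [∀ n, DecidableEq (ι n)]
    {R S : ∀ n, Matrix (ι n) (ι n) ℂ} (hR : ∀ n, (R n).PosSemidef) (hR1 : ∀ n, (R n).trace = 1)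
    (hS : ∀ n, (S n).IsHermitian) {μ : Measure ℝ} [IsProbabilityMeasure μ]
    (h : ∀ t, Tendsto (fun n => (R n * evol (S n) t).trace) atTop (𝓝 (charFun μ t)))
    (f : BoundedContinuousFunction ℝ ℝ) :
    Tendsto (fun n => (R n * cfc (fun x => f x) (S n)).trace) atTop
      (𝓝 ((∫ x, f x ∂μ : ℝ) : ℂ)) := by
  let law (n : ℕ) : ProbabilityMeasure ℝ :=
    ⟨measLaw (hS n) (R n), isProbabilityMeasure_measLaw (hS n) (hR n) (hR1 n)⟩
  have hlaw : Tendsto law atTop (𝓝 ⟨μ, inferInstance⟩) :=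
    ProbabilityMeasure.tendsto_iff_tendsto_charFun.2 fun t =>
      (h t).congr fun n => (charFun_measLaw (hS n) (hR n) t).symm
  have hint := ProbabilityMeasure.tendsto_iff_forall_integral_tendsto.1 hlaw f
  simp only [trace_mul_cfc (hS _) (hR _)]
  exact (Complex.continuous_ofReal.tendsto _).comp hint

variable {d r : ℕ} {A ρ : Matrix (Fin d) (Fin d) ℂ} {K : Matrix (Fin r → Fin d) (Fin r → Fin d) ℂ}

lemma tendsto_trace_evol_inv_sqrt_mul_pow (hA : A.IsHermitian) (hρ : ρ.PosSemidef)
    (hρ1 : ρ.trace = 1) (hmean : (ρ * A).trace = 0) (t : ℝ) :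
    Tendsto (fun n : ℕ => (ρ * evol A ((√n)⁻¹ * t)).trace ^ n) atTop
      (𝓝 (charFun (gaussianReal 0 (ρ * (A * A)).trace.re.toNNReal) t)) := by
  have := isProbabilityMeasure_measLaw hA hρ hρ1
  have hmem : MemLp id 2 (measLaw hA ρ) :=
    (memLp_two_iff_integrable_sq aestronglyMeasurable_id).2 (integrable_measLaw hA _)
  have hzero : ∫ x, x ∂(measLaw hA ρ) = 0 := by
    rw [← Complex.ofReal_eq_zero, integral_id_measLaw hA hρ, hmean]
  rw [← integral_sq_measLaw hA hρ, Complex.ofReal_re]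
  simp only [← charFun_measLaw hA hρ]
  exact tendsto_charFun_inv_sqrt_mul_pow_gaussianReal hmem hzero t

lemma sqrt_smul_qUstat_sub_iidExp (hr : 0 < r) {n : ℕ} (hrn : r ≤ n)
    (ρ : Matrix (Fin d) (Fin d) ℂ) (K : Matrix (Fin r → Fin d) (Fin r → Fin d) ℂ) :
    √n • (qUstat K n - iidExp ρ K • 1) =
      (√n)⁻¹ • ∑ i, siteOp i ((r : ℝ) • firstHoef hr ρ K) +
        √n • qUstat (higherHoef hr ρ K) n := by
  have hscale : √n * ((r : ℝ) / n) = (√n)⁻¹ * r := by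
    have : (0 : ℝ) < n := Nat.cast_pos.2 (hr.trans_le hrn)
    field_simp
    rw [Real.sq_sqrt this.le]
  have hsite : ∀ i : Fin n, siteOp i ((r : ℝ) • firstHoef hr ρ K) =
      (r : ℝ) • siteOp i (firstHoef hr ρ K) := fun i => by
    rw [← Complex.coe_smul, map_smul, Complex.coe_smul]
  have hcoeff : ((r : ℂ) / n) = ((r / n : ℝ) : ℂ) := by push_cast; rfl
  rw [qUstat_higherHoef hr hrn, smul_sub _ (_ - _), hcoeff, Complex.coe_smul, smul_smul, hscale]
  simp only [hsite, ← Finset.smul_sum, smul_smul]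
  rw [add_sub_cancel]

lemma tendsto_iidExp_evol_sqrt_smul_qUstat (hr : 0 < r) (hρ : ρ.PosSemidef) (hρ1 : ρ.trace = 1)
    (hKh : K.IsHermitian) (hK : IsSymmetricKernel K) (t : ℝ) :
    Tendsto (fun n : ℕ => iidExp ρ (evol (√n • (qUstat K n - iidExp ρ K • 1)) t)) atTop
      (𝓝 (charFun (gaussianReal 0
        ((r : ℝ) ^ 2 * (ρ * (firstHoef hr ρ K * firstHoef hr ρ K)).trace.re).toNNReal) t)) := by
  have hA : ((r : ℝ) • firstHoef hr ρ K).IsHermitian :=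
    (IsSelfAdjoint.all _).smul (isHermitian_firstHoef hr hρ.1 hKh).isSelfAdjoint
  have hmean : (ρ * ((r : ℝ) • firstHoef hr ρ K)).trace = 0 := by
    rw [mul_smul_comm, Matrix.trace_smul, trace_mul_firstHoef hr hρ1, smul_zero]
  have hvar : (ρ * (((r : ℝ) • firstHoef hr ρ K) * ((r : ℝ) • firstHoef hr ρ K))).trace.re =
      (r : ℝ) ^ 2 * (ρ * (firstHoef hr ρ K * firstHoef hr ρ K)).trace.re := by
    rw [smul_mul_smul_comm, mul_smul_comm, Matrix.trace_smul, Complex.smul_re, smul_eq_mul, pow_two]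
  have hrem := tendsto_iidExp_evol_sub hA hρ hρ1 (isHermitian_higherHoef hr hρ.1 hKh)
    (iidExp_higherHoef hr hρ1 hK) (condSlot_higherHoef hr hρ1 hK) t
  have hlim := hrem.add (tendsto_trace_evol_inv_sqrt_mul_pow hA hρ hρ1 hmean t)
  simp only [sub_add_cancel, zero_add, hvar] at hlim
  refine hlim.congr' ?_
  filter_upwards [eventually_ge_atTop r] with n hrn
  rw [sqrt_smul_qUstat_sub_iidExp hr hrn]

end Convergence

theorem stmt14_general {d r : ℕ} (hr : 0 < r) (ρ : Matrix (Fin d) (Fin d) ℂ)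
    (hρ : ρ.PosSemidef) (hρtr : ρ.trace = 1)
    (K : Matrix (Fin r → Fin d) (Fin r → Fin d) ℂ)
    (hherm : K.IsHermitian)
    (hsym : ∀ (τ : Equiv.Perm (Fin r)) (x y : Fin r → Fin d), K (x ∘ τ) (y ∘ τ) = K x y)
    (θ : ℂ) (hθ : θ = ((tensorFam fun _ : Fin r => ρ) * K).trace)
    (ξ₁ : ℂ) (hξ : ξ₁ = (ρ * (firstHoef hr ρ K * firstHoef hr ρ K)).trace) :
    ∀ f : BoundedContinuousFunction ℝ ℝ,
      Tendsto
        (fun n => ((tensorFam fun _ : Fin n => ρ) *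
          cfc (fun x : ℝ => f x)
            ((Real.sqrt n) •
              (qUstat K n - θ • (1 : Matrix (Fin n → Fin d) (Fin n → Fin d) ℂ)))).trace)
        atTop
        (𝓝 ((∫ x, f x ∂(gaussianReal 0 (((r : ℝ) ^ 2 * ξ₁.re).toNNReal)) : ℝ) : ℂ)) := by
  rw [← iidExp_apply] at hθ
  subst hθ hξ
  have hstate (n : ℕ) : (tensorFam fun _ : Fin n => ρ).PosSemidef :=
    posSemidef_tensorFam fun _ => hρ
  have htrace (n : ℕ) : (tensorFam fun _ : Fin n => ρ).trace = 1 := by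
    simp [trace_tensorFam, hρtr]
  have hself (n : ℕ) : (√n • (qUstat K n - iidExp ρ K • 1)).IsHermitian :=
    (IsSelfAdjoint.all _).smul
      ((isHermitian_qUstat hherm n).sub (isHermitian_iidExp_smul_one hρ.1 hherm)).isSelfAdjoint
  exact tendsto_trace_mul_cfc hstate htrace hself
    (tendsto_iidExp_evol_sqrt_smul_qUstat hr hρ hρtr hherm hsym)

/-- **Asymptotic normality of non-degenerate quantum U-statistics** (convergence in
distribution of the measurement outcomes). -/
theorem stmt14 {d r : ℕ} (hr : 0 < r) (ρ : Matrix (Fin d) (Fin d) ℂ)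
    (hρ : ρ.PosDef) (hρtr : ρ.trace = 1)
    (K : Matrix (Fin r → Fin d) (Fin r → Fin d) ℂ)
    (hherm : K.IsHermitian)
    (hsym : ∀ (τ : Equiv.Perm (Fin r)) (x y : Fin r → Fin d), K (x ∘ τ) (y ∘ τ) = K x y)
    (θ : ℂ) (hθ : θ = ((tensorFam fun _ : Fin r => ρ) * K).trace)
    (ξ₁ : ℂ) (hξ : ξ₁ = (ρ * (firstHoef hr ρ K * firstHoef hr ρ K)).trace)
    (hnondeg : firstHoef hr ρ K ≠ 0) :
    ∀ f : BoundedContinuousFunction ℝ ℝ,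
      Tendsto
        (fun n => ((tensorFam fun _ : Fin n => ρ) *
          cfc (fun x : ℝ => f x)
            ((Real.sqrt n) •
              (qUstat K n - θ • (1 : Matrix (Fin n → Fin d) (Fin n → Fin d) ℂ)))).trace)
        atTop
        (𝓝 ((∫ x, f x ∂(gaussianReal 0 (((r : ℝ) ^ 2 * ξ₁.re).toNNReal)) : ℝ) : ℂ)) :=
  stmt14_general hr ρ hρ.posSemidef hρtr K hherm hsym θ hθ ξ₁ hξ
end
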